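/- arXiv:math/9901146 — 2 statements merged into one kernel-verified Lean document; each statement's English description precedes it below -/
import Mathlib

section
/- For every integer s ≥ 0 and every K > 0 there exists C > 0 such that for all ε ∈ (0,1], all z₀, s₀ ∈ C^∞(D₀) with C¹-norms at most K, and all u ∈ C^∞(D₀): |u|~_s² ≤ C(‖u‖_s² + ‖u‖_{L^∞}²·(1 + ‖ε z₀‖_s² + ‖ε s₀‖_s²)) and ‖u‖_s² ≤ C(|u|~_s² + ‖u‖_{L^∞}²·(1 + ‖ε z₀‖_s² + ‖ε s₀‖_s²)). In particular the norms ‖·‖_s and |·|~_s are equivalent. -/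
open MeasureTheory

noncomputable section

/-- Partial derivative in coordinate `i` (0 = x, 1 = y, 2 = t) of a function on `ℝ × ℝ × ℝ`. -/
def pd (i : Fin 3) (f : ℝ × ℝ × ℝ → ℝ) (p : ℝ × ℝ × ℝ) : ℝ :=
  if i = 0 then deriv (fun s => f (s, p.2.1, p.2.2)) p.1
  else if i = 1 then deriv (fun s => f (p.1, s, p.2.2)) p.2.1
  else deriv (fun s => f (p.1, p.2.1, s)) p.2.2

/-- The domain `D₀ = [−A₀, M] × ℝ × [0, 1]`. -/
def D0 (A₀ M : ℝ) : Set (ℝ × ℝ × ℝ) :=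
  {p | p.1 ∈ Set.Icc (-A₀) M ∧ p.2.2 ∈ Set.Icc 0 1}

/-- One period cell `[−A₀, M] × [0, 2π] × [0, 1]` of `D₀`. -/
def cell (A₀ M : ℝ) : Set (ℝ × ℝ × ℝ) :=
  {p | p.1 ∈ Set.Icc (-A₀) M ∧ p.2.1 ∈ Set.Icc 0 (2 * Real.pi) ∧ p.2.2 ∈ Set.Icc 0 1}

/-- `2π`-periodicity in the variable `y`. -/
def PerY (f : ℝ × ℝ × ℝ → ℝ) : Prop :=
  ∀ x y t : ℝ, f (x, y + 2 * Real.pi, t) = f (x, y, t)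

/-- The field `Z = ∂_t + ε z₀ ∂_y`. -/
def Zop (ε : ℝ) (z0 : ℝ × ℝ × ℝ → ℝ) (f : ℝ × ℝ × ℝ → ℝ) (p : ℝ × ℝ × ℝ) : ℝ :=
  pd 2 f p + ε * z0 p * pd 1 f p

/-- The field `S = ∂_x + ε s₀ ∂_t`. -/
def Sop (ε : ℝ) (s0 : ℝ × ℝ × ℝ → ℝ) (f : ℝ × ℝ × ℝ → ℝ) (p : ℝ × ℝ × ℝ) : ℝ :=
  pd 0 f p + ε * s0 p * pd 2 f p

/-- The three letters `Z`, `S`, `∂_y`. -/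
def fieldLetter (ε : ℝ) (z0 s0 : ℝ × ℝ × ℝ → ℝ) (i : Fin 3) :
    (ℝ × ℝ × ℝ → ℝ) → ℝ × ℝ × ℝ → ℝ :=
  if i = 0 then Zop ε z0 else if i = 1 then Sop ε s0 else pd 1

/-- Composition `T^w` of the fields along a word `w`. -/
def fieldComp (ε : ℝ) (z0 s0 : ℝ × ℝ × ℝ → ℝ) :
    {n : ℕ} → (Fin n → Fin 3) → (ℝ × ℝ × ℝ → ℝ) → ℝ × ℝ × ℝ → ℝ
  | 0, _, f => f
  | _ + 1, w, f => fieldLetter ε z0 s0 (w 0) (fieldComp ε z0 s0 (fun j => w j.succ) f)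

/-- Composition `∂^w` of coordinate derivatives along a word `w`. -/
def pdComp : {n : ℕ} → (Fin n → Fin 3) → (ℝ × ℝ × ℝ → ℝ) → ℝ × ℝ × ℝ → ℝ
  | 0, _, f => f
  | _ + 1, w, f => pd (w 0) (pdComp (fun j => w j.succ) f)

/-- Squared standard Sobolev norm `‖u‖_s²` on the period cell. -/
def cellSobSq (A₀ M : ℝ) (s : ℕ) (u : ℝ × ℝ × ℝ → ℝ) : ℝ :=
  ∑ i ∈ Finset.range (s + 1), ∑ w : Fin i → Fin 3,
    ∫ p in cell A₀ M, (pdComp w u p) ^ 2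

/-- Squared field norm `|u|~_s²` on the period cell. -/
def cellFieldSq (A₀ M ε : ℝ) (z0 s0 : ℝ × ℝ × ℝ → ℝ) (s : ℕ) (u : ℝ × ℝ × ℝ → ℝ) : ℝ :=
  ∑ i ∈ Finset.range (s + 1), ∑ w : Fin i → Fin 3,
    ∫ p in cell A₀ M, (fieldComp ε z0 s0 w u p) ^ 2

/-- Sup norm over the period cell. -/
def supCell (A₀ M : ℝ) (u : ℝ × ℝ × ℝ → ℝ) : ℝ :=
  sSup ((fun p => |u p|) '' cell A₀ M)

/-- `C¹`-bound by `K` on `D₀`. -/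
def C1Bound (A₀ M K : ℝ) (f : ℝ × ℝ × ℝ → ℝ) : Prop :=
  ∀ p ∈ D0 A₀ M, |f p| ≤ K ∧ |pd 0 f p| ≤ K ∧ |pd 1 f p| ≤ K ∧ |pd 2 f p| ≤ K


lemma hasDerivAt_absrpow_mul {s : ℝ} (hs : 0 < s) (x : ℝ) :
    HasDerivAt (fun x : ℝ => |x| ^ s * x) ((s + 1) * |x| ^ s) x := by
  rcases lt_trichotomy x 0 with h | h | h
  · have h1 : HasDerivAt (fun x : ℝ => (-x) ^ s * x) ((s + 1) * |x| ^ s) x := by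
      have := ((hasDerivAt_neg x).rpow_const (p := s) (Or.inl (by linarith))).mul (hasDerivAt_id x)
      refine HasDerivAt.congr_deriv this ?_
      rw [abs_of_neg h, Real.rpow_sub_one (by linarith)]
      have : x ≠ 0 := h.ne
      simp only [id]
      field_simp
    refine h1.congr_of_eventuallyEq ?_
    filter_upwards [Iio_mem_nhds h] with y hy
    rw [abs_of_neg hy]
  · subst h
    rw [abs_zero, Real.zero_rpow hs.ne', mul_zero, hasDerivAt_iff_isLittleO]
    simp only [abs_zero, mul_zero, sub_zero, smul_zero]
    have h1 : Filter.Tendsto (fun x : ℝ => |x| ^ s) (nhds 0) (nhds 0) := by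
      have : Continuous (fun x : ℝ => |x| ^ s) := continuous_abs.rpow_const (fun _ => Or.inr hs.le)
      have := this.tendsto 0
      simpa [Real.zero_rpow hs.ne'] using this
    have h2 := ((Asymptotics.isLittleO_one_iff ℝ).2 h1).mul_isBigO
      (Asymptotics.isBigO_refl (fun x : ℝ => x) (nhds 0))
    simpa using h2
  · have h1 : HasDerivAt (fun x : ℝ => x ^ s * x) ((s + 1) * |x| ^ s) x := by
      have := ((hasDerivAt_id x).rpow_const (p := s) (Or.inl h.ne')).mul (hasDerivAt_id x)
      refine HasDerivAt.congr_deriv this ?_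
      rw [abs_of_pos h, Real.rpow_sub_one (by simpa using h.ne')]
      simp only [id]
      field_simp
    refine h1.congr_of_eventuallyEq ?_
    filter_upwards [Ioi_mem_nhds h] with y hy
    rw [abs_of_pos hy]

lemma cont_abs_rpow {X : Type*} [TopologicalSpace X] {f : X → ℝ} (hf : Continuous f) {s : ℝ}
    (hs : 0 ≤ s) : Continuous (fun x => |f x| ^ s) :=
  hf.abs.rpow_const (fun _ => Or.inr hs)

/-- The integrand produced by integration by parts. -/
def partsE (α β q : ℝ) (w w1 w2 : ℝ → ℝ) (x : ℝ) : ℝ :=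
  (-(1 / (β - α))) * (w x * (|w1 x| ^ (q - 2) * w1 x)) +
    ((β - x) / (β - α)) * (w1 x * (|w1 x| ^ (q - 2) * w1 x) +
      w x * (((q - 2) + 1) * |w1 x| ^ (q - 2) * w2 x))

lemma partsE_cont (α β q : ℝ) (hq : 2 < q) {w w1 w2 : ℝ → ℝ} (h0 : Continuous w)
    (h1 : Continuous w1) (h2 : Continuous w2) : Continuous (partsE α β q w w1 w2) := by
  have := cont_abs_rpow h1 (s := q - 2) (by linarith)
  unfold partsE
  fun_prop

lemma partsE_int (α β q : ℝ) (hαβ : α < β) (hq : 2 < q) {w w1 w2 : ℝ → ℝ}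
    (h0 : ∀ x, HasDerivAt w (w1 x) x) (h1 : ∀ x, HasDerivAt w1 (w2 x) x) (h2 : Continuous w2) :
    ∫ x in α..β, partsE α β q w w1 w2 x = - (w α * (|w1 α| ^ (q - 2) * w1 α)) := by
  have c0 : Continuous w := continuous_iff_continuousAt.2 fun x => (h0 x).continuousAt
  have c1 : Continuous w1 := continuous_iff_continuousAt.2 fun x => (h1 x).continuousAt
  have hd : β - α ≠ 0 := by linarith
  have key : ∀ x, HasDerivAt
      (fun x => ((β - x) / (β - α)) * (w x * (|w1 x| ^ (q - 2) * w1 x)))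
      (partsE α β q w w1 w2 x) x := by
    intro x
    have hp := (hasDerivAt_absrpow_mul (s := q - 2) (by linarith) (w1 x)).comp x (h1 x)
    have hφ : HasDerivAt (fun x => (β - x) / (β - α)) (-(1 / (β - α))) x := by
      have := ((hasDerivAt_id x).const_sub β).div_const (β - α)
      exact HasDerivAt.congr_deriv this (by ring)
    exact hφ.mul ((h0 x).mul hp)
  rw [intervalIntegral.integral_eq_sub_of_hasDerivAt (fun x _ => key x)
    ((partsE_cont α β q hq c0 c1 h2).intervalIntegrable _ _)]
  rw [div_self hd]; simp

lemma partsE_lower (α β q : ℝ) (hαβ : α < β) (hq : 2 < q) (w w1 w2 : ℝ → ℝ) (x : ℝ)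
    (hx : x ∈ Set.Icc α β) :
    ((β - x) / (β - α)) * |w1 x| ^ q ≤ partsE α β q w w1 w2 x +
      (1 / (β - α) + (q - 1)) * (|w x| * |w1 x| ^ (q - 2) * (|w1 x| + |w2 x|)) := by
  have hd : 0 < β - α := by linarith
  set φ := (β - x) / (β - α) with hφ
  have hφ0 : 0 ≤ φ := div_nonneg (by linarith [hx.2]) hd.le
  have hφ1 : φ ≤ 1 := (div_le_one hd).2 (by linarith [hx.1])
  set R := |w1 x| ^ (q - 2) with hR
  have hR0 : 0 ≤ R := Real.rpow_nonneg (abs_nonneg _) _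
  have e1 : |w1 x| ^ q = w1 x * (R * w1 x) := by
    have : |w1 x| ^ q = |w1 x| ^ ((q - 2) + (2 : ℕ)) := by push_cast; congr 1; ring
    rw [this, Real.rpow_add' (abs_nonneg _) (by push_cast; linarith), Real.rpow_natCast, sq_abs]
    ring
  unfold partsE
  rw [e1, ← hR]
  set κ := 1 / (β - α) with hκ
  have hκ0 : 0 < κ := by positivity
  have b1 : κ * (w x * (R * w1 x)) ≤ κ * (|w x| * R * |w1 x|) := by
    apply mul_le_mul_of_nonneg_left _ hκ0.le
    calc w x * (R * w1 x) ≤ |w x * (R * w1 x)| := le_abs_self _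
      _ = _ := by rw [abs_mul, abs_mul, abs_of_nonneg hR0]; ring
  have b2 : -(w x * ((q - 2 + 1) * R * w2 x)) ≤ (q - 1) * (|w x| * R * |w2 x|) := by
    calc -(w x * ((q - 2 + 1) * R * w2 x)) ≤ |w x * ((q - 2 + 1) * R * w2 x)| := neg_le_abs _
      _ = _ := by
        rw [abs_mul, abs_mul, abs_mul, abs_of_nonneg hR0, abs_of_nonneg (by linarith : 0 ≤ q-2+1)]
        ring
  have n1 : 0 ≤ |w x| * R * |w1 x| := by positivity
  have n2 : 0 ≤ |w x| * R * |w2 x| := by positivity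
  have b3 : φ * -(w x * ((q - 2 + 1) * R * w2 x)) ≤ (q - 1) * (|w x| * R * |w2 x|) := by
    have t : 0 ≤ (q - 1) * (|w x| * R * |w2 x|) := mul_nonneg (by linarith) n2
    calc _ ≤ φ * ((q - 1) * (|w x| * R * |w2 x|)) := mul_le_mul_of_nonneg_left b2 hφ0
      _ ≤ 1 * ((q - 1) * (|w x| * R * |w2 x|)) := mul_le_mul_of_nonneg_right hφ1 t
      _ = _ := one_mul _
  have b4 : 0 ≤ (q - 1) * (|w x| * R * |w1 x|) := mul_nonneg (by linarith) n1
  have b5 : 0 ≤ κ * (|w x| * R * |w2 x|) := mul_nonneg hκ0.le n2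
  nlinarith

/-- Young inequality with a small parameter. -/
lemma young_small {P Q : ℝ} (h : P.HolderConjugate Q) {δ : ℝ} (hδ : 0 < δ) :
    ∃ C : ℝ, 0 < C ∧ ∀ x y : ℝ, 0 ≤ x → 0 ≤ y → x * y ≤ δ * x ^ P + C * y ^ Q := by
  have hP := h.pos
  have hQ := h.symm.pos
  set l := (δ * P) ^ (1 / P) with hl
  have hl0 : 0 < l := Real.rpow_pos_of_pos (by positivity) _
  refine ⟨(1 / l) ^ Q / Q, by positivity, fun x y hx hy => ?_⟩
  have := Real.young_inequality_of_nonneg (a := l * x) (b := (1 / l) * y) (by positivity)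
    (by positivity) h
  have e : l * x * (1 / l * y) = x * y := by field_simp
  rw [e, Real.mul_rpow hl0.le hx, Real.mul_rpow (by positivity) hy] at this
  have e2 : l ^ P = δ * P := by
    rw [hl, ← Real.rpow_mul (by positivity)]
    rw [one_div_mul_cancel hP.ne', Real.rpow_one]
  rw [e2] at this
  calc x * y ≤ _ := this
    _ = _ := by field_simp

lemma rpow_add_le' {x y p : ℝ} (hx : 0 ≤ x) (hy : 0 ≤ y) (hp : 0 ≤ p) :
    (x + y) ^ p ≤ 2 ^ p * (x ^ p + y ^ p) := by
  have h1 : x + y ≤ 2 * max x y := by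
    have := le_max_left x y; have := le_max_right x y; linarith
  have hm : 0 ≤ max x y := le_max_of_le_left hx
  calc (x + y) ^ p ≤ (2 * max x y) ^ p := Real.rpow_le_rpow (by positivity) h1 hp
    _ = 2 ^ p * (max x y) ^ p := Real.mul_rpow (by norm_num) hm
    _ ≤ _ := by
      apply mul_le_mul_of_nonneg_left _ (by positivity)
      have a1 : 0 ≤ x ^ p := by positivity
      have a2 : 0 ≤ y ^ p := by positivity
      rcases max_choice x y with h | h <;> rw [h] <;> linarith

lemma rpow_le_two {z x y c p : ℝ} (hz : 0 ≤ z) (hx : 0 ≤ x) (hy : 0 ≤ y) (hc : 0 ≤ c) (hp : 0 ≤ p)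
    (h : z ≤ c * (x + y)) : z ^ p ≤ (2 * c) ^ p * (x ^ p + y ^ p) := by
  calc z ^ p ≤ (c * (x + y)) ^ p := Real.rpow_le_rpow hz h hp
    _ = c ^ p * (x + y) ^ p := Real.mul_rpow hc (by positivity)
    _ ≤ c ^ p * (2 ^ p * (x ^ p + y ^ p)) :=
      mul_le_mul_of_nonneg_left (rpow_add_le' hx hy hp) (by positivity)
    _ = _ := by rw [Real.mul_rpow (by norm_num) hc]; ring

/-- Pointwise bound of the bulk term. -/
lemma bulk_le {q : ℝ} (hq : 2 < q) {η : ℝ} (hη : 0 < η) :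
    ∃ E : ℝ, 0 < E ∧ ∀ (p r δ C B : ℝ), 
      (∀ a c : ℝ, 0 ≤ a → 0 ≤ c → a ≤ B → (a * c) ^ (q / 2) ≤ δ * a ^ p + C * c ^ r) →
      ∀ a b c : ℝ, 0 ≤ a → 0 ≤ b → 0 ≤ c → a ≤ B →
        a * b ^ (q - 2) * c ≤ η * b ^ q + E * (δ * a ^ p + C * c ^ r) := by
  have hconj : (q / (q - 2)).HolderConjugate (q / 2) := by
    rw [Real.holderConjugate_iff]
    have : 0 < q - 2 := by linarith
    refine ⟨by rw [lt_div_iff₀ this]; linarith, ?_⟩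
    field_simp; ring
  obtain ⟨E, hE, h⟩ := young_small hconj hη
  refine ⟨E, hE, fun p r δ C B H a b c ha hb hc hB => ?_⟩
  have h1 := h (b ^ (q - 2)) (a * c) (by positivity) (by positivity)
  rw [← Real.rpow_mul hb, mul_div_cancel₀ _ (by linarith)] at h1
  have h2 := mul_le_mul_of_nonneg_left (H a c ha hc hB) hE.le
  nlinarith

/-- The majorant on a line. -/
def majN (q p r η G δ C : ℝ) (v v1 v2 : ℝ → ℝ) (x : ℝ) : ℝ :=
  η * |v1 x| ^ q + G * (δ * |v x| ^ p + C * (|v1 x| ^ r + |v2 x| ^ r))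

lemma majN_cont {q p r : ℝ} (hq : 0 ≤ q) (hp : 0 ≤ p) (hr : 0 ≤ r) (η G δ C : ℝ)
    {w w1 w2 : ℝ → ℝ} (h0 : Continuous w)
    (h1 : Continuous w1) (h2 : Continuous w2) : Continuous (majN q p r η G δ C w w1 w2) := by
  have := cont_abs_rpow h1 hq
  have := cont_abs_rpow h1 hr
  have := cont_abs_rpow h2 hr
  have := cont_abs_rpow h0 hp
  unfold majN
  fun_prop

lemma majN_nonneg {q p r η G δ C : ℝ} (hη : 0 ≤ η) (hG : 0 ≤ G) (hδ : 0 ≤ δ) (hC : 0 ≤ C)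
    (v v1 v2 : ℝ → ℝ) (x : ℝ) : 0 ≤ majN q p r η G δ C v v1 v2 x := by
  unfold majN; positivity

lemma bulk_two {q p r : ℝ} (hq : 2 < q) (hp : 0 ≤ p) (hr : 0 ≤ r) :
    ∃ A : ℝ, 0 < A ∧ ∀ η : ℝ, 0 < η → ∃ E : ℝ, 0 < E ∧ ∀ (δ C B : ℝ), 0 ≤ δ → 0 ≤ C → 0 ≤ B →
      (∀ a c : ℝ, 0 ≤ a → 0 ≤ c → a ≤ 8 * B → (a * c) ^ (q / 2) ≤ δ * a ^ p + C * c ^ r) →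
      ∀ a b c a' b' c' x y z : ℝ, 0 ≤ a → 0 ≤ b → 0 ≤ c → 0 ≤ a' → 0 ≤ b' → 0 ≤ c' →
        0 ≤ x → 0 ≤ y → 0 ≤ z → a ≤ B → a' ≤ B →
        x ≤ 4 * (a + a') → y ≤ 4 * (b + b') → z ≤ 4 * (c + c') →
        x * y ^ (q - 2) * (y + z) ≤
          A * ((η * b ^ q + E * (δ * a ^ p + C * (b ^ r + c ^ r))) +
          (η * b' ^ q + E * (δ * a' ^ p + C * (b' ^ r + c' ^ r)))) := by
  refine ⟨8 ^ q + 8 ^ p + 16 ^ r, by positivity, fun η hη => ?_⟩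
  obtain ⟨E, hE, h⟩ := bulk_le hq hη
  refine ⟨E, hE, fun δ C B hδ hC hB H a b c a' b' c' x y z ha hb hc ha' hb' hc' hx hy hz hab hab'
    h1 h2 h3 => ?_⟩
  have k := h p r δ C (8 * B) H x y (y + z) hx hy (by positivity) (by linarith)
  have k1 : x ^ p ≤ 8 ^ p * (a ^ p + a' ^ p) := by
    have := rpow_le_two hx ha ha' (by norm_num : (0:ℝ) ≤ 4) hp h1; norm_num at this; exact this
  have k2 : y ^ q ≤ 8 ^ q * (b ^ q + b' ^ q) := by
    have := rpow_le_two hy hb hb' (by norm_num : (0:ℝ) ≤ 4) (by linarith : 0 ≤ q) h2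
    norm_num at this; exact this
  have k3 : y ^ r ≤ 8 ^ r * (b ^ r + b' ^ r) := by
    have := rpow_le_two hy hb hb' (by norm_num : (0:ℝ) ≤ 4) hr h2; norm_num at this; exact this
  have k4 : z ^ r ≤ 8 ^ r * (c ^ r + c' ^ r) := by
    have := rpow_le_two hz hc hc' (by norm_num : (0:ℝ) ≤ 4) hr h3; norm_num at this; exact this
  have k5 : (y + z) ^ r ≤ 16 ^ r * (b ^ r + c ^ r + (b' ^ r + c' ^ r)) := by
    calc _ ≤ 2 ^ r * (y ^ r + z ^ r) := rpow_add_le' hy hz hr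
      _ ≤ 2 ^ r * (8 ^ r * (b ^ r + b' ^ r) + 8 ^ r * (c ^ r + c' ^ r)) := by gcongr
      _ = _ := by
        rw [show (16 : ℝ) = 2 * 8 by norm_num, Real.mul_rpow (by norm_num) (by norm_num)]; ring
  have A1 : (8:ℝ) ^ p ≤ 8 ^ q + 8 ^ p + 16 ^ r := by
    have : (0:ℝ) ≤ 8 ^ q := by positivity
    have : (0:ℝ) ≤ 16 ^ r := by positivity
    linarith
  have A2 : (8:ℝ) ^ q ≤ 8 ^ q + 8 ^ p + 16 ^ r := by
    have : (0:ℝ) ≤ 8 ^ p := by positivity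
    have : (0:ℝ) ≤ 16 ^ r := by positivity
    linarith
  have A3 : (16:ℝ) ^ r ≤ 8 ^ q + 8 ^ p + 16 ^ r := by
    have : (0:ℝ) ≤ 8 ^ p := by positivity
    have : (0:ℝ) ≤ 8 ^ q := by positivity
    linarith
  set A := (8:ℝ) ^ q + 8 ^ p + 16 ^ r
  calc _ ≤ _ := k
    _ ≤ η * (A * (b ^ q + b' ^ q)) + E * (δ * (A * (a ^ p + a' ^ p)) +
        C * (A * (b ^ r + c ^ r + (b' ^ r + c' ^ r)))) := by
      gcongr
      · exact k2.trans (by gcongr)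
      · exact k1.trans (by gcongr)
      · exact k5.trans (by gcongr)
    _ = _ := by ring

lemma integral_half_le {α β : ℝ} (hαβ : α < β) {h : ℝ → ℝ} (hc : Continuous h)
    (h0 : ∀ x, 0 ≤ h x) :
    ∫ x in α..β, h ((x + α) / 2) ≤ 2 * ∫ x in α..β, h x := by
  have e : (fun x => h ((x + α) / 2)) = fun x => h (x / 2 + α / 2) := by
    funext x; congr 1; ring
  have := intervalIntegral.integral_comp_div_add (a := α) (b := β) h (c := 2) (by norm_num) (α / 2)
  rw [e, this, smul_eq_mul]
  apply mul_le_mul_of_nonneg_left _ (by norm_num)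
  rw [show α / 2 + α / 2 = α by ring]
  apply intervalIntegral.integral_mono_interval le_rfl (by linarith) (by linarith)
  · exact Filter.Eventually.of_forall h0
  · exact hc.intervalIntegrable _ _

lemma left_half {α β q p r : ℝ} (hαβ : α < β) (hq : 2 < q) (hp : 0 ≤ p) (hr : 0 ≤ r) :
    ∃ A : ℝ, 0 < A ∧ ∀ η : ℝ, 0 < η → ∃ E : ℝ, 0 < E ∧ ∀ (δ C B : ℝ), 0 ≤ δ → 0 ≤ C → 0 ≤ B →
      (∀ a c : ℝ, 0 ≤ a → 0 ≤ c → a ≤ 8 * B → (a * c) ^ (q / 2) ≤ δ * a ^ p + C * c ^ r) →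
      ∀ v v1 v2 : ℝ → ℝ, (∀ x, HasDerivAt v (v1 x) x) → (∀ x, HasDerivAt v1 (v2 x) x) →
        Continuous v2 → (∀ x ∈ Set.Icc α β, |v x| ≤ B) →
        ∫ x in α..β, ((β - x) / (β - α)) * |v1 x| ^ q ≤
          A * ∫ x in α..β, majN q p r η E δ C v v1 v2 x := by
  obtain ⟨A, hA, h⟩ := bulk_two hq hp hr
  have hd : 0 < β - α := by linarith
  set κ := 1 / (β - α) + (q - 1) with hκ
  have hκ0 : 0 < κ := by have : 0 < 1 / (β - α) := by positivity
                         linarith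
  refine ⟨5 * (κ * A), by positivity, fun η hη => ?_⟩
  obtain ⟨E, hE, h⟩ := h η hη
  refine ⟨E, hE, fun δ C B hδ hC hB H v v1 v2 h0 h1 h2 hv => ?_⟩
  have c0 : Continuous v := continuous_iff_continuousAt.2 fun x => (h0 x).continuousAt
  have c1 : Continuous v1 := continuous_iff_continuousAt.2 fun x => (h1 x).continuousAt
  set N := majN q p r η E δ C v v1 v2 with hN
  have cN : Continuous N := majN_cont (by linarith) hp hr _ _ _ _ c0 c1 h2
  have N0 : ∀ x, 0 ≤ N x := majN_nonneg hη.le hE.le hδ hC v v1 v2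
  set F := fun x => -3 * v x + 4 * v ((x + α) / 2) with hF
  set F1 := fun x => -3 * v1 x + 2 * v1 ((x + α) / 2) with hF1
  set F2 := fun x => -3 * v2 x + v2 ((x + α) / 2) with hF2
  have hg : ∀ x, HasDerivAt (fun x => (x + α) / 2) (1 / 2) x := fun x =>
    ((hasDerivAt_id x).add_const α).div_const 2
  have dF : ∀ x, HasDerivAt F (F1 x) x := fun x => by
    have := ((h0 x).const_mul (-3)).add
      (((h0 ((x + α) / 2)).comp x (hg x)).const_mul 4)
    refine HasDerivAt.congr_deriv this ?_
    simp only [hF1]; ring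
  have dF1 : ∀ x, HasDerivAt F1 (F2 x) x := fun x => by
    have := ((h1 x).const_mul (-3)).add
      (((h1 ((x + α) / 2)).comp x (hg x)).const_mul 2)
    refine HasDerivAt.congr_deriv this ?_
    simp only [hF2]; ring
  have cF : Continuous F := continuous_iff_continuousAt.2 fun x => (dF x).continuousAt
  have cF1 : Continuous F1 := continuous_iff_continuousAt.2 fun x => (dF1 x).continuousAt
  have cF2 : Continuous F2 := by fun_prop
  have iv := partsE_int α β q hαβ hq h0 h1 h2
  have iF := partsE_int α β q hαβ hq dF dF1 cF2
  have cv' := partsE_cont α β q hq c0 c1 h2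
  have cF' := partsE_cont α β q hq cF cF1 cF2
  have sum0 : ∫ x in α..β, (partsE α β q v v1 v2 x + partsE α β q F F1 F2 x) = 0 := by
    rw [intervalIntegral.integral_add (cv'.intervalIntegrable _ _) (cF'.intervalIntegrable _ _),
      iv, iF]
    have : (α + α) / 2 = α := by ring
    have e1 : F α = v α := by simp only [hF, this]; ring
    have e2 : F1 α = - v1 α := by simp only [hF1, this]; ring
    rw [e1, e2, abs_neg]; ring
  have cNh : Continuous (fun x => N ((x + α) / 2)) := by fun_prop
  have cφ : Continuous fun x => (β - x) / (β - α) * |v1 x| ^ q := by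
    have := cont_abs_rpow c1 (s := q) (by linarith)
    fun_prop
  have pt : ∀ x ∈ Set.Icc α β, (β - x) / (β - α) * |v1 x| ^ q ≤
      (partsE α β q v v1 v2 x + partsE α β q F F1 F2 x) +
        (κ * A) * (3 * N x + N ((x + α) / 2)) := by
    intro x hx
    have hx' : (x + α) / 2 ∈ Set.Icc α β := ⟨by linarith [hx.1], by linarith [hx.1, hx.2]⟩
    have l1 := partsE_lower α β q hαβ hq v v1 v2 x hx
    have l2 := partsE_lower α β q hαβ hq F F1 F2 x hx
    have l3 : 0 ≤ (β - x) / (β - α) * |F1 x| ^ q := 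
      mul_nonneg (div_nonneg (by linarith [hx.2]) hd.le) (by positivity)
    have m1 := h δ C B hδ hC hB H |v x| |v1 x| |v2 x| |v x| |v1 x| |v2 x| |v x| |v1 x| |v2 x|
      (abs_nonneg _) (abs_nonneg _) (abs_nonneg _) (abs_nonneg _) (abs_nonneg _) (abs_nonneg _)
      (abs_nonneg _) (abs_nonneg _) (abs_nonneg _) (hv x hx) (hv x hx)
      (by linarith [abs_nonneg (v x)]) (by linarith [abs_nonneg (v1 x)])
      (by linarith [abs_nonneg (v2 x)])
    have m2 := h δ C B hδ hC hB H |v x| |v1 x| |v2 x| |v ((x + α) / 2)| |v1 ((x + α) / 2)|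
      |v2 ((x + α) / 2)| |F x| |F1 x| |F2 x|
      (abs_nonneg _) (abs_nonneg _) (abs_nonneg _) (abs_nonneg _) (abs_nonneg _) (abs_nonneg _)
      (abs_nonneg _) (abs_nonneg _) (abs_nonneg _) (hv x hx) (hv _ hx')
      (by
        have := abs_add_le (-3 * v x) (4 * v ((x + α) / 2))
        rw [abs_mul, abs_mul] at this; norm_num at this
        simp only [hF]; norm_num
        linarith [abs_nonneg (v x)])
      (by
        have := abs_add_le (-3 * v1 x) (2 * v1 ((x + α) / 2))
        rw [abs_mul, abs_mul] at this; norm_num at this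
        simp only [hF1]; norm_num
        linarith [abs_nonneg (v1 x), abs_nonneg (v1 ((x + α) / 2))])
      (by
        have := abs_add_le (-3 * v2 x) (v2 ((x + α) / 2))
        rw [abs_mul] at this; norm_num at this
        simp only [hF2]; norm_num
        linarith [abs_nonneg (v2 x), abs_nonneg (v2 ((x + α) / 2))])
    have m1' := mul_le_mul_of_nonneg_left m1 hκ0.le
    have m2' := mul_le_mul_of_nonneg_left m2 hκ0.le
    change _ ≤ κ * (A * (N x + N x)) at m1'
    change _ ≤ κ * (A * (N x + N ((x + α) / 2))) at m2'
    linarith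
  have cS : Continuous fun x => partsE α β q v v1 v2 x + partsE α β q F F1 F2 x := cv'.add cF'
  have cM : Continuous fun x => (κ * A) * (3 * N x + N ((x + α) / 2)) := by fun_prop
  have := intervalIntegral.integral_mono_on (μ := volume) hαβ.le (cφ.intervalIntegrable _ _)
    ((cS.add cM).intervalIntegrable _ _) pt
  refine this.trans ?_
  simp only [Pi.add_apply]
  rw [intervalIntegral.integral_add (cS.intervalIntegrable _ _) (cM.intervalIntegrable _ _), sum0,
    zero_add, intervalIntegral.integral_const_mul, intervalIntegral.integral_add
      ((cN.const_mul 3).intervalIntegrable _ _) (cNh.intervalIntegrable _ _),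
    intervalIntegral.integral_const_mul]
  have := integral_half_le hαβ cN N0
  have hh := mul_le_mul_of_nonneg_left this (mul_pos hκ0 hA).le
  linarith

/-- One-dimensional interpolation inequality. -/
lemma line_ineq {α β q p r : ℝ} (hαβ : α < β) (hq : 2 < q) (hp : 0 ≤ p) (hr : 0 ≤ r) :
    ∃ A : ℝ, 0 < A ∧ ∀ (δ C B : ℝ), 0 ≤ δ → 0 ≤ C → 0 ≤ B →
      (∀ a c : ℝ, 0 ≤ a → 0 ≤ c → a ≤ 8 * B → (a * c) ^ (q / 2) ≤ δ * a ^ p + C * c ^ r) →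
      ∀ v v1 v2 : ℝ → ℝ, (∀ x, HasDerivAt v (v1 x) x) → (∀ x, HasDerivAt v1 (v2 x) x) →
        Continuous v2 → (∀ x ∈ Set.Icc α β, |v x| ≤ B) →
        ∫ x in α..β, |v1 x| ^ q ≤
          A * ∫ x in α..β, (δ * |v x| ^ p + C * (|v1 x| ^ r + |v2 x| ^ r)) := by
  obtain ⟨A, hA, h⟩ := left_half hαβ hq hp hr
  obtain ⟨E, hE, h⟩ := h (1 / (4 * A)) (by positivity)
  have hd : β - α ≠ 0 := by linarith
  refine ⟨4 * A * E, by positivity, fun δ C B hδ hC hB H v v1 v2 h0 h1 h2 hv => ?_⟩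
  have c0 : Continuous v := continuous_iff_continuousAt.2 fun x => (h0 x).continuousAt
  have c1 : Continuous v1 := continuous_iff_continuousAt.2 fun x => (h1 x).continuousAt
  have hl := h δ C B hδ hC hB H v v1 v2 h0 h1 h2 hv
  have hg : ∀ x, HasDerivAt (fun x => α + β - x) (-1) x := fun x =>
    (hasDerivAt_id x).const_sub (α + β)
  have hr' := h δ C B hδ hC hB H (fun x => v (α + β - x)) (fun x => - v1 (α + β - x))
    (fun x => v2 (α + β - x))
    (fun x => HasDerivAt.congr_deriv ((h0 (α + β - x)).comp x (hg x)) (by ring))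
    (fun x => HasDerivAt.congr_deriv ((h1 (α + β - x)).comp x (hg x)).neg (by ring))
    (by fun_prop) (fun x hx => hv _ ⟨by linarith [hx.2], by linarith [hx.1]⟩)
  have e1 : ∫ x in α..β, majN q p r (1 / (4 * A)) E δ C (fun x => v (α + β - x))
      (fun x => - v1 (α + β - x)) (fun x => v2 (α + β - x)) x =
      ∫ x in α..β, majN q p r (1 / (4 * A)) E δ C v v1 v2 x := by
    have := intervalIntegral.integral_comp_sub_left (a := α) (b := β)
      (fun x => majN q p r (1 / (4 * A)) E δ C v v1 v2 x) (α + β)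
    rw [show α + β - β = α by ring, show α + β - α = β by ring] at this
    rw [← this]
    simp only [majN, abs_neg]
  have e2 : ∫ x in α..β, (β - x) / (β - α) * |(fun x => - v1 (α + β - x)) x| ^ q =
      ∫ x in α..β, (x - α) / (β - α) * |v1 x| ^ q := by
    have := intervalIntegral.integral_comp_sub_left (a := α) (b := β)
      (fun x => (x - α) / (β - α) * |v1 x| ^ q) (α + β)
    rw [show α + β - β = α by ring, show α + β - α = β by ring] at this
    rw [← this]
    congr 1; funext x; simp only [abs_neg]; congr 2; ring
  rw [e1, e2] at hr'
  have cv := cont_abs_rpow c1 (s := q) (by linarith)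
  have cv1 := cont_abs_rpow c1 hr
  have cv2 := cont_abs_rpow h2 hr
  have cv0 := cont_abs_rpow c0 hp
  have e3 : ∫ x in α..β, |v1 x| ^ q = (∫ x in α..β, (β - x) / (β - α) * |v1 x| ^ q) +
      ∫ x in α..β, (x - α) / (β - α) * |v1 x| ^ q := by
    rw [← intervalIntegral.integral_add]
    · congr 1; funext x; field_simp; ring
    · exact Continuous.intervalIntegrable (by fun_prop) _ _
    · exact Continuous.intervalIntegrable (by fun_prop) _ _
  have e4 : ∫ x in α..β, majN q p r (1 / (4 * A)) E δ C v v1 v2 x =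
      1 / (4 * A) * (∫ x in α..β, |v1 x| ^ q) +
        E * ∫ x in α..β, (δ * |v x| ^ p + C * (|v1 x| ^ r + |v2 x| ^ r)) := by
    unfold majN
    rw [intervalIntegral.integral_add, intervalIntegral.integral_const_mul,
      intervalIntegral.integral_const_mul]
    · exact Continuous.intervalIntegrable (by fun_prop) _ _
    · exact Continuous.intervalIntegrable (by fun_prop) _ _
  rw [e4] at hl hr'
  set X := ∫ x in α..β, |v1 x| ^ q
  set Y := ∫ x in α..β, (δ * |v x| ^ p + C * (|v1 x| ^ r + |v2 x| ^ r))
  have e5 : A * (1 / (4 * A) * X + E * Y) = X / 4 + A * E * Y := by field_simp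
  rw [e5] at hl hr'
  linarith

/-! ### Partial derivatives and lines -/

/-- Replace coordinate `i` of `p` by `s`. -/
def setc (i : Fin 3) (p : ℝ × ℝ × ℝ) (s : ℝ) : ℝ × ℝ × ℝ :=
  if i = 0 then (s, p.2.1, p.2.2) else if i = 1 then (p.1, s, p.2.2) else (p.1, p.2.1, s)

def bvec (i : Fin 3) : ℝ × ℝ × ℝ :=
  if i = 0 then (1, 0, 0) else if i = 1 then (0, 1, 0) else (0, 0, 1)

lemma setc_hasDerivAt (i : Fin 3) (p : ℝ × ℝ × ℝ) (s : ℝ) :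
    HasDerivAt (setc i p) (bvec i) s := by
  fin_cases i
  · exact (hasDerivAt_id s).prodMk ((hasDerivAt_const s p.2.1).prodMk (hasDerivAt_const s p.2.2))
  · exact (hasDerivAt_const s p.1).prodMk ((hasDerivAt_id s).prodMk (hasDerivAt_const s p.2.2))
  · exact (hasDerivAt_const s p.1).prodMk ((hasDerivAt_const s p.2.1).prodMk (hasDerivAt_id s))

lemma line_hasDerivAt_fderiv {f : ℝ × ℝ × ℝ → ℝ} (hf : ContDiff ℝ (⊤ : ℕ∞) f) (i : Fin 3)
    (p : ℝ × ℝ × ℝ) (s : ℝ) :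
    HasDerivAt (fun s => f (setc i p s)) (fderiv ℝ f (setc i p s) (bvec i)) s := by
  have h1 : DifferentiableAt ℝ f (setc i p s) := (hf.differentiable (by simp)) _
  exact h1.hasFDerivAt.comp_hasDerivAt s (setc_hasDerivAt i p s)

lemma pd_eq {f : ℝ × ℝ × ℝ → ℝ} (hf : ContDiff ℝ (⊤ : ℕ∞) f) (i : Fin 3)
    (p : ℝ × ℝ × ℝ) : pd i f p = fderiv ℝ f p (bvec i) := by
  fin_cases i
  · exact (line_hasDerivAt_fderiv hf 0 p p.1).deriv
  · exact (line_hasDerivAt_fderiv hf 1 p p.2.1).deriv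
  · exact (line_hasDerivAt_fderiv hf 2 p p.2.2).deriv

lemma pd_smooth {f : ℝ × ℝ × ℝ → ℝ} (hf : ContDiff ℝ (⊤ : ℕ∞) f) (i : Fin 3) :
    ContDiff ℝ (⊤ : ℕ∞) (pd i f) := by
  have : pd i f = fun p => fderiv ℝ f p (bvec i) := funext (pd_eq hf i)
  rw [this]
  exact (hf.fderiv_right (m := (⊤ : ℕ∞)) (by simp)).clm_apply contDiff_const

lemma line_hasDerivAt {f : ℝ × ℝ × ℝ → ℝ} (hf : ContDiff ℝ (⊤ : ℕ∞) f) (i : Fin 3)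
    (p : ℝ × ℝ × ℝ) (s : ℝ) :
    HasDerivAt (fun s => f (setc i p s)) (pd i f (setc i p s)) s := by
  rw [pd_eq hf]; exact line_hasDerivAt_fderiv hf i p s

lemma pdComp_smooth {f : ℝ × ℝ × ℝ → ℝ} (hf : ContDiff ℝ (⊤ : ℕ∞) f) :
    ∀ {n : ℕ} (w : Fin n → Fin 3), ContDiff ℝ (⊤ : ℕ∞) (pdComp w f)
  | 0, _ => hf
  | _ + 1, w => pd_smooth (pdComp_smooth hf (fun j => w j.succ)) (w 0)

lemma pd_add {f g : ℝ × ℝ × ℝ → ℝ} (hf : ContDiff ℝ (⊤ : ℕ∞) f) (hg : ContDiff ℝ (⊤ : ℕ∞) g)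
    (i : Fin 3) : pd i (fun p => f p + g p) = fun p => pd i f p + pd i g p := by
  funext p
  rw [pd_eq (hf.add hg), pd_eq hf, pd_eq hg, fderiv_fun_add
    (hf.differentiable (by simp) p) (hg.differentiable (by simp) p)]
  rfl

lemma pd_mul {f g : ℝ × ℝ × ℝ → ℝ} (hf : ContDiff ℝ (⊤ : ℕ∞) f) (hg : ContDiff ℝ (⊤ : ℕ∞) g)
    (i : Fin 3) : pd i (fun p => f p * g p) = fun p => pd i f p * g p + f p * pd i g p := by
  funext p
  rw [pd_eq (hf.mul hg), pd_eq hf, pd_eq hg, fderiv_fun_mul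
    (hf.differentiable (by simp) p) (hg.differentiable (by simp) p)]
  simp; ring

lemma cell_eq (A₀ M : ℝ) : cell A₀ M =
    Set.Icc (-A₀) M ×ˢ (Set.Icc 0 (2 * Real.pi) ×ˢ Set.Icc (0:ℝ) 1) := by
  rfl

lemma cell_compact (A₀ M : ℝ) : IsCompact (cell A₀ M) := by
  rw [cell_eq]; exact isCompact_Icc.prod (isCompact_Icc.prod isCompact_Icc)

lemma cell_meas (A₀ M : ℝ) : MeasurableSet (cell A₀ M) := (cell_compact A₀ M).measurableSet

lemma cell_intg (A₀ M : ℝ) {h : ℝ × ℝ × ℝ → ℝ} (hc : Continuous h) :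
    IntegrableOn h (cell A₀ M) := hc.continuousOn.integrableOn_compact (cell_compact A₀ M)

def lo (A₀ : ℝ) (i : Fin 3) : ℝ := if i = 0 then -A₀ else 0
def hi (M : ℝ) (i : Fin 3) : ℝ := if i = 0 then M else if i = 1 then 2 * Real.pi else 1

lemma lo_lt_hi {A₀ M : ℝ} (h : -A₀ < M) (i : Fin 3) : lo A₀ i < hi M i := by
  fin_cases i
  · exact h
  · simpa [lo, hi] using Real.pi_pos
  · simp [lo, hi]

lemma setc_mem {A₀ M : ℝ} {p : ℝ × ℝ × ℝ} (hp : p ∈ cell A₀ M) (i : Fin 3) {s : ℝ}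
    (hs : s ∈ Set.Icc (lo A₀ i) (hi M i)) : setc i p s ∈ cell A₀ M := by
  obtain ⟨h1, h2, h3⟩ := hp
  fin_cases i
  · exact ⟨hs, h2, h3⟩
  · exact ⟨h1, hs, h3⟩
  · exact ⟨h1, h2, hs⟩

lemma box_nonpos {A₀ M : ℝ} (hAM : -A₀ < M) (i : Fin 3) {h : ℝ × ℝ × ℝ → ℝ} (hc : Continuous h)
    (hl : ∀ p ∈ cell A₀ M, ∫ s in lo A₀ i..hi M i, h (setc i p s) ≤ 0) :
    ∫ p in cell A₀ M, h p ≤ 0 := by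
  have hcell := cell_intg A₀ M hc
  rw [cell_eq] at hcell ⊢
  have l2 : (0:ℝ) ≤ 2 * Real.pi := by positivity
  fin_cases i
  · rw [Measure.volume_eq_prod, ← setIntegral_prod_swap, setIntegral_prod _ (by
      rw [Measure.volume_eq_prod] at hcell; exact hcell.swap)]
    apply setIntegral_nonpos (measurableSet_Icc.prod measurableSet_Icc)
    intro z hz
    have := hl (M, z) ⟨⟨hAM.le, le_rfl⟩, hz.1, hz.2⟩
    change ∫ s in (-A₀)..M, h (s, z.1, z.2) ≤ 0 at this
    rw [intervalIntegral.integral_of_le hAM.le, ← integral_Icc_eq_integral_Ioc] at this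
    exact this
  · rw [Measure.volume_eq_prod, setIntegral_prod _ hcell]
    apply setIntegral_nonpos measurableSet_Icc
    intro x hx
    have hi2 : IntegrableOn (fun z => h (x, z)) (Set.Icc 0 (2 * Real.pi) ×ˢ Set.Icc (0:ℝ) 1)
      := (by fun_prop : Continuous fun z => h (x, z)).continuousOn.integrableOn_compact
        (isCompact_Icc.prod isCompact_Icc)
    rw [Measure.volume_eq_prod, ← setIntegral_prod_swap, setIntegral_prod _ (by
      rw [Measure.volume_eq_prod] at hi2; exact hi2.swap)]
    apply setIntegral_nonpos measurableSet_Icc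
    intro z hz
    have := hl (x, 0, z) ⟨hx, ⟨le_rfl, l2⟩, hz⟩
    change ∫ s in (0:ℝ)..(2 * Real.pi), h (x, s, z) ≤ 0 at this
    rw [intervalIntegral.integral_of_le l2, ← integral_Icc_eq_integral_Ioc] at this
    exact this
  · rw [Measure.volume_eq_prod, setIntegral_prod _ hcell]
    apply setIntegral_nonpos measurableSet_Icc
    intro x hx
    have hi2 : IntegrableOn (fun z => h (x, z)) (Set.Icc 0 (2 * Real.pi) ×ˢ Set.Icc (0:ℝ) 1)
      := (by fun_prop : Continuous fun z => h (x, z)).continuousOn.integrableOn_compact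
        (isCompact_Icc.prod isCompact_Icc)
    rw [Measure.volume_eq_prod, setIntegral_prod _ hi2]
    apply setIntegral_nonpos measurableSet_Icc
    intro y hy
    have := hl (x, y, 0) ⟨hx, hy, ⟨le_rfl, zero_le_one⟩⟩
    change ∫ s in (0:ℝ)..1, h (x, y, s) ≤ 0 at this
    rw [intervalIntegral.integral_of_le zero_le_one, ← integral_Icc_eq_integral_Ioc] at this
    exact this

lemma box_ineq {A₀ M : ℝ} (hAM : -A₀ < M) {q p r : ℝ} (hq : 2 < q) (hp : 0 ≤ p) (hr : 0 ≤ r)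
    (i : Fin 3) :
    ∃ A : ℝ, 0 < A ∧ ∀ (δ C B : ℝ), 0 ≤ δ → 0 ≤ C → 0 ≤ B →
      (∀ a c : ℝ, 0 ≤ a → 0 ≤ c → a ≤ 8 * B → (a * c) ^ (q / 2) ≤ δ * a ^ p + C * c ^ r) →
      ∀ v : ℝ × ℝ × ℝ → ℝ, ContDiff ℝ (⊤ : ℕ∞) v → (∀ x ∈ cell A₀ M, |v x| ≤ B) →
        ∫ x in cell A₀ M, |pd i v x| ^ q ≤
          A * (δ * (∫ x in cell A₀ M, |v x| ^ p) + C * ((∫ x in cell A₀ M, |pd i v x| ^ r) +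
            ∫ x in cell A₀ M, |pd i (pd i v) x| ^ r)) := by
  obtain ⟨A, hA, h⟩ := line_ineq (lo_lt_hi hAM i) hq hp hr
  refine ⟨A, hA, fun δ C B hδ hC hB H v hv hvB => ?_⟩
  have s1 := pd_smooth hv i
  have s2 := pd_smooth s1 i
  have c0 := cont_abs_rpow hv.continuous hp
  have c1 := cont_abs_rpow s1.continuous hr
  have c1' := cont_abs_rpow s1.continuous (s := q) (by linarith)
  have c2 := cont_abs_rpow s2.continuous hr
  have cs : ∀ p, Continuous (setc i p) := fun p =>
    continuous_iff_continuousAt.2 fun x => (setc_hasDerivAt i p x).continuousAt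
  have cG : Continuous fun x => δ * |v x| ^ p + C * (|pd i v x| ^ r + |pd i (pd i v) x| ^ r) := by
    fun_prop
  have key := box_nonpos hAM i (h := fun x => |pd i v x| ^ q - A * (δ * |v x| ^ p +
    C * (|pd i v x| ^ r + |pd i (pd i v) x| ^ r))) (by fun_prop) (by
      intro p hp'
      have := h δ C B hδ hC hB H (fun s => v (setc i p s)) (fun s => pd i v (setc i p s))
        (fun s => pd i (pd i v) (setc i p s)) (line_hasDerivAt hv i p) (line_hasDerivAt s1 i p)
        (s2.continuous.comp (cs p)) (fun x hx => hvB _ (setc_mem hp' i hx))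
      rw [intervalIntegral.integral_sub, intervalIntegral.integral_const_mul]
      · linarith
      · exact (c1'.comp (cs p)).intervalIntegrable _ _
      · exact ((cG.comp (cs p)).const_mul A).intervalIntegrable _ _)
  have cs2 : Continuous fun x => |pd i v x| ^ r + |pd i (pd i v) x| ^ r := c1.add c2
  rw [integral_sub (cell_intg _ _ c1') ((cell_intg _ _ cG).const_mul A), integral_const_mul,
    integral_add ((cell_intg _ _ c0).const_mul δ) ((cell_intg _ _ cs2).const_mul C), integral_const_mul, integral_const_mul] at key
  rw [
    integral_add (cell_intg _ _ c1) (cell_intg _ _ c2)] at key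
  linarith

/-! ### Gagliardo-Nirenberg on the cell -/

/-- Sum of integrals of powers of derivatives of order at most `k`. -/
def JJ (A₀ M : ℝ) (k : ℕ) (e : ℝ) (f : ℝ × ℝ × ℝ → ℝ) : ℝ :=
  ∑ j ∈ Finset.range (k + 1), ∑ w : Fin j → Fin 3, ∫ x in cell A₀ M, |pdComp w f x| ^ e

lemma int_abs_nonneg (A₀ M e : ℝ) (f : ℝ × ℝ × ℝ → ℝ) : 0 ≤ ∫ x in cell A₀ M, |f x| ^ e :=
  integral_nonneg fun _ => Real.rpow_nonneg (abs_nonneg _) _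

lemma JJ_nonneg (A₀ M : ℝ) (k : ℕ) (e : ℝ) (f : ℝ × ℝ × ℝ → ℝ) : 0 ≤ JJ A₀ M k e f :=
  Finset.sum_nonneg fun _ _ => Finset.sum_nonneg fun _ _ => int_abs_nonneg _ _ _ _

lemma JJ_term (A₀ M : ℝ) {k j : ℕ} (hj : j ≤ k) (e : ℝ) (f : ℝ × ℝ × ℝ → ℝ) (w : Fin j → Fin 3) :
    ∫ x in cell A₀ M, |pdComp w f x| ^ e ≤ JJ A₀ M k e f := by
  calc ∫ x in cell A₀ M, |pdComp w f x| ^ e ≤ 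
      ∑ w : Fin j → Fin 3, ∫ x in cell A₀ M, |pdComp w f x| ^ e :=
        Finset.single_le_sum (f := fun w : Fin j → Fin 3 => ∫ x in cell A₀ M, |pdComp w f x| ^ e)
          (fun _ _ => int_abs_nonneg _ _ _ _) (Finset.mem_univ w)
    _ ≤ _ := Finset.single_le_sum (f := fun j => ∑ w : Fin j → Fin 3,
        ∫ x in cell A₀ M, |pdComp w f x| ^ e)
          (fun _ _ => Finset.sum_nonneg fun _ _ => int_abs_nonneg _ _ _ _)
          (Finset.mem_range.2 (by omega))

lemma JJ_step {A₀ M : ℝ} (hAM : -A₀ < M) {q p r : ℝ} (hq : 2 < q) (hp : 0 ≤ p) (hr : 0 ≤ r)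
    (m : ℕ) :
    ∃ A : ℝ, 0 < A ∧ ∀ (δ C B : ℝ), 0 ≤ δ → 0 ≤ C → 0 ≤ B →
      (∀ a c : ℝ, 0 ≤ a → 0 ≤ c → a ≤ 8 * B → (a * c) ^ (q / 2) ≤ δ * a ^ p + C * c ^ r) →
      ∀ f : ℝ × ℝ × ℝ → ℝ, ContDiff ℝ (⊤ : ℕ∞) f →
        (∀ j ≤ m, ∀ w : Fin j → Fin 3, ∀ x ∈ cell A₀ M, |pdComp w f x| ≤ B) →
        JJ A₀ M (m + 1) q f ≤ A * (δ * JJ A₀ M m p f + C * JJ A₀ M (m + 2) r f) := by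
  choose A hA h using fun i => box_ineq hAM hq hp hr i
  obtain ⟨A', hA0, hA1, hAA⟩ : ∃ A' : ℝ, 0 < A' ∧ 1 ≤ 2 * A' ∧ ∀ i, 2 * A i ≤ 2 * A' := by
    have h0 := hA 0
    have h1 := hA 1
    have h2 := hA 2
    refine ⟨A 0 + A 1 + A 2 + 1, by linarith, by linarith, ?_⟩
    rw [Fin.forall_fin_succ, Fin.forall_fin_two]
    refine ⟨by linarith, ?_, ?_⟩
    · change 2 * A 1 ≤ _
      linarith
    · change 2 * A 2 ≤ _
      linarith
  obtain ⟨N, hN⟩ : ∃ N : ℝ, N = ∑ j ∈ Finset.range (m + 1 + 1), ∑ w : Fin j → Fin 3, (1 : ℝ) :=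
    ⟨_, rfl⟩
  have hN0 : 0 < N := by
    rw [hN]
    apply Finset.sum_pos
    · exact fun j _ => Finset.sum_pos (fun _ _ => one_pos) Finset.univ_nonempty
    · exact ⟨0, Finset.mem_range.2 (by omega)⟩
  refine ⟨N * (2 * A'), by positivity, fun δ C B hδ hC hB H f hf hfB => ?_⟩
  have J1 := JJ_nonneg A₀ M m p f
  have J2 := JJ_nonneg A₀ M (m + 2) r f
  set T := δ * JJ A₀ M m p f + C * JJ A₀ M (m + 2) r f with hT
  have hT0 : 0 ≤ T := by positivity
  have main : ∀ j ≤ m + 1, ∀ w : Fin j → Fin 3,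
      ∫ x in cell A₀ M, |pdComp w f x| ^ q ≤ 1 * (2 * A' * T) := by
    intro j hj w
    rw [one_mul]
    rcases Nat.lt_or_ge j (m + 1) with hlt | hge
    · have cw := (pdComp_smooth hf w).continuous
      have c0 := cont_abs_rpow cw hp
      have c1 := cont_abs_rpow cw hr
      have cq := cont_abs_rpow cw (s := q) (by linarith)
      calc ∫ x in cell A₀ M, |pdComp w f x| ^ q
          ≤ ∫ x in cell A₀ M, (δ * |pdComp w f x| ^ p + C * |pdComp w f x| ^ r) := by
            apply setIntegral_mono_on (cell_intg _ _ cq) (cell_intg _ _ (by fun_prop))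
              (cell_meas _ _)
            intro x hx
            have a0 := abs_nonneg (pdComp w f x)
            have := H _ _ a0 a0
              ((hfB j (by omega) w x hx).trans (by linarith))
            refine le_trans (le_of_eq ?_) this
            rw [Real.mul_rpow a0 a0, ← Real.rpow_add' a0 (by linarith)]
            congr 1; ring
        _ = δ * (∫ x in cell A₀ M, |pdComp w f x| ^ p) +
            C * ∫ x in cell A₀ M, |pdComp w f x| ^ r := by
            rw [integral_add ((cell_intg _ _ c0).const_mul δ) ((cell_intg _ _ c1).const_mul C),
              integral_const_mul, integral_const_mul]
        _ ≤ T := by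
            have t1 := JJ_term A₀ M (show j ≤ m by omega) p f w
            have t2 := JJ_term A₀ M (show j ≤ m + 2 by omega) r f w
            rw [hT]; gcongr
        _ ≤ _ := le_mul_of_one_le_left hT0 hA1
    · obtain rfl : j = m + 1 := by omega
      have t1 := JJ_term A₀ M (le_refl m) p f (fun j => w j.succ)
      have t2 := JJ_term A₀ M (show m + 1 ≤ m + 2 by omega) r f w
      have t3 := JJ_term A₀ M (le_refl (m + 2)) r f
        (Fin.cons (w 0) w : Fin (m + 2) → Fin 3)
      have k := h (w 0) δ C B hδ hC hB H (pdComp (fun j => w j.succ) f)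
        (pdComp_smooth hf _) (fun x hx => hfB m le_rfl _ x hx)
      change ∫ x in cell A₀ M, |pdComp w f x| ^ q ≤ _ at k
      refine k.trans ?_
      have k2 : A (w 0) * (δ * (∫ x in cell A₀ M, |pdComp (fun j => w j.succ) f x| ^ p) +
          C * ((∫ x in cell A₀ M, |pd (w 0) (pdComp (fun j => w j.succ) f) x| ^ r) +
          ∫ x in cell A₀ M, |pd (w 0) (pd (w 0) (pdComp (fun j => w j.succ) f)) x| ^ r)) ≤
          A (w 0) * (δ * JJ A₀ M m p f + C * (JJ A₀ M (m + 2) r f + JJ A₀ M (m + 2) r f)) := by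
        have := (hA (w 0)).le
        apply mul_le_mul_of_nonneg_left _ this
        exact add_le_add (mul_le_mul_of_nonneg_left t1 hδ)
          (mul_le_mul_of_nonneg_left (add_le_add t2 t3) hC)
      refine k2.trans ?_
      calc _ ≤ 2 * A (w 0) * T := by
            rw [hT]
            have : 0 ≤ A (w 0) * (δ * JJ A₀ M m p f) := mul_nonneg (hA _).le (by positivity)
            linarith
        _ ≤ _ := mul_le_mul_of_nonneg_right (hAA _) hT0
  calc JJ A₀ M (m + 1) q f ≤ ∑ j ∈ Finset.range (m + 1 + 1), ∑ w : Fin j → Fin 3,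
        1 * (2 * A' * T) := 
        Finset.sum_le_sum fun j hj => Finset.sum_le_sum fun w _ =>
          main j (by have := Finset.mem_range.1 hj; omega) w
    _ = N * (2 * A') * T := by
      rw [mul_assoc N, hN]
      simp only [Finset.sum_mul]

lemma exists_deriv_bound (A₀ M : ℝ) {f : ℝ × ℝ × ℝ → ℝ} (hf : ContDiff ℝ (⊤ : ℕ∞) f) (m : ℕ) :
    ∃ B : ℝ, 0 ≤ B ∧ ∀ j ≤ m, ∀ w : Fin j → Fin 3, ∀ x ∈ cell A₀ M, |pdComp w f x| ≤ B := by
  have hc : Continuous fun x => ∑ j ∈ Finset.range (m + 1), ∑ w : Fin j → Fin 3,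
      |pdComp w f x| :=
    continuous_finsetSum _ fun j _ => continuous_finsetSum _ fun w _ =>
      (pdComp_smooth hf w).continuous.abs
  obtain ⟨B, hB⟩ := (cell_compact A₀ M).exists_bound_of_continuousOn hc.continuousOn
  refine ⟨max B 0, le_max_right _ _, fun j hj w x hx => ?_⟩
  refine le_trans ?_ (((le_abs_self _).trans (hB x hx)).trans (le_max_left _ _))
  calc |pdComp w f x| ≤ ∑ w : Fin j → Fin 3, |pdComp w f x| :=
        Finset.single_le_sum (f := fun w : Fin j → Fin 3 => |pdComp w f x|)
          (fun _ _ => abs_nonneg _) (Finset.mem_univ w)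
    _ ≤ _ := Finset.single_le_sum (f := fun j => ∑ w : Fin j → Fin 3, |pdComp w f x|)
          (fun _ _ => Finset.sum_nonneg fun _ _ => abs_nonneg _)
          (Finset.mem_range.2 (by omega))

lemma GN_step {A₀ M : ℝ} (hAM : -A₀ < M) (n : ℕ) {B : ℝ} (hB : 0 ≤ B) (m : ℕ) :
    m + 1 < n → ∃ C : ℝ, 0 < C ∧ ∀ f : ℝ × ℝ × ℝ → ℝ, ContDiff ℝ (⊤ : ℕ∞) f →
      (∀ x ∈ cell A₀ M, |f x| ≤ B) →
      JJ A₀ M (m + 1) (2 * n / ((m + 1 : ℕ) : ℝ)) f ≤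
        C * JJ A₀ M (m + 2) (2 * n / ((m + 2 : ℕ) : ℝ)) f := by
  induction m with
  | zero =>
    intro hn
    have hn' : (2:ℝ) ≤ n := by exact_mod_cast hn
    obtain ⟨A, hA, h⟩ := JJ_step hAM (q := 2 * n / ((0 + 1 : ℕ) : ℝ)) (p := 1)
      (r := 2 * n / ((0 + 2 : ℕ) : ℝ)) (by norm_num; linarith) (by norm_num) (by positivity) 0
    refine ⟨A * ((8 * B) ^ (n : ℝ) + 1), by positivity, fun f hf hfB => ?_⟩
    have := h 0 ((8 * B) ^ (n : ℝ) + 1) B le_rfl (by positivity) hB (by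
      intro a c ha hc haB
      have e1 : 2 * (n:ℝ) / ((0 + 1 : ℕ) : ℝ) / 2 = n := by norm_num
      have e2 : 2 * (n:ℝ) / ((0 + 2 : ℕ) : ℝ) = n := by norm_num
      rw [e1, e2, Real.mul_rpow ha hc, zero_mul, zero_add]
      have t1 : a ^ (n : ℝ) ≤ (8 * B) ^ (n : ℝ) := Real.rpow_le_rpow ha haB (by positivity)
      have t2 : 0 ≤ c ^ (n : ℝ) := Real.rpow_nonneg hc _
      exact mul_le_mul_of_nonneg_right (by linarith) t2) f hf (by
        intro j hj w x hx
        obtain rfl : j = 0 := by omega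
        exact hfB x hx)
    refine this.trans (le_of_eq ?_)
    ring
  | succ k ih =>
    intro hn
    obtain ⟨Ck, hCk, hk⟩ := ih (by omega)
    have hn' : ((k:ℝ) + 1 + 1) < n := by exact_mod_cast hn
    have hn0 : (0:ℝ) < n := by linarith [(Nat.cast_nonneg k : (0:ℝ) ≤ k)]
    set p : ℝ := 2 * n / ((k + 1 : ℕ) : ℝ) with hp
    set q : ℝ := 2 * n / ((k + 1 + 1 : ℕ) : ℝ) with hq
    set r : ℝ := 2 * n / ((k + 1 + 2 : ℕ) : ℝ) with hr
    have hq2 : 2 < q := by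
      rw [hq, lt_div_iff₀ (by positivity)]; push_cast; linarith
    obtain ⟨A, hA, h⟩ := JJ_step hAM (q := q) (p := p) (r := r) hq2 (by positivity)
      (by positivity) (k + 1)
    have hconj : (2 * ((k:ℝ) + 2) / (k + 1)).HolderConjugate (2 * ((k:ℝ) + 2) / (k + 3)) := by
      rw [Real.holderConjugate_iff]
      refine ⟨by rw [lt_div_iff₀ (by positivity)]; linarith, ?_⟩
      field_simp; ring
    obtain ⟨C, hC, hy⟩ := young_small hconj (δ := 1 / (2 * A * Ck)) (by positivity)
    refine ⟨2 * A * C, by positivity, fun f hf hfB => ?_⟩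
    obtain ⟨B', hB', hb⟩ := exists_deriv_bound A₀ M hf (k + 1)
    have := h (1 / (2 * A * Ck)) C B' (by positivity) hC.le hB' (by
      intro a c ha hc _
      have := hy (a ^ (q / 2)) (c ^ (q / 2)) (by positivity) (by positivity)
      rw [← Real.rpow_mul ha, ← Real.rpow_mul hc] at this
      have e1 : q / 2 * (2 * ((k:ℝ) + 2) / (k + 1)) = p := by
        rw [hp, hq]; push_cast; field_simp; ring
      have e2 : q / 2 * (2 * ((k:ℝ) + 2) / (k + 3)) = r := by
        rw [hr, hq]; push_cast; field_simp; ring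
      rw [e1, e2] at this
      rw [Real.mul_rpow ha hc]; exact this) f hf hb
    have k1 := hk f hf hfB
    change JJ A₀ M (k + 1) p f ≤ Ck * JJ A₀ M (k + 1 + 1) q f at k1
    set X := JJ A₀ M (k + 1 + 1) q f
    set Y := JJ A₀ M (k + 1 + 2) r f
    have k2 : A * (1 / (2 * A * Ck) * JJ A₀ M (k + 1) p f + C * Y) ≤
        A * (1 / (2 * A * Ck) * (Ck * X) + C * Y) := by gcongr
    have e3 : A * (1 / (2 * A * Ck) * (Ck * X) + C * Y) = X / 2 + A * C * Y := by field_simp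
    linarith

lemma JJ_top (A₀ M : ℝ) (n : ℕ) (hn : 1 ≤ n) (f : ℝ × ℝ × ℝ → ℝ) :
    JJ A₀ M n (2 * n / (n : ℝ)) f = cellSobSq A₀ M n f := by
  have : (n:ℝ) ≠ 0 := by positivity
  rw [mul_div_cancel_right₀ _ this]
  unfold JJ cellSobSq
  refine Finset.sum_congr rfl fun j _ => Finset.sum_congr rfl fun w _ => ?_
  congr 1; funext x
  rw [show (2:ℝ) = ((2:ℕ):ℝ) by norm_num, Real.rpow_natCast, sq_abs]

lemma GN_chain {A₀ M : ℝ} (hAM : -A₀ < M) (n : ℕ) {B : ℝ} (hB : 0 ≤ B) {j : ℕ} (hj : 1 ≤ j)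
    (m : ℕ) (hm : j ≤ m) : m ≤ n → ∃ C : ℝ, 0 < C ∧ ∀ f : ℝ × ℝ × ℝ → ℝ, ContDiff ℝ (⊤ : ℕ∞) f →
      (∀ x ∈ cell A₀ M, |f x| ≤ B) →
      JJ A₀ M j (2 * n / (j : ℝ)) f ≤ C * JJ A₀ M m (2 * n / (m : ℝ)) f := by
  induction m, hm using Nat.le_induction with
  | base => exact fun _ => ⟨1, one_pos, fun f _ _ => by rw [one_mul]⟩
  | succ m hm ih =>
    intro hn
    obtain ⟨C1, h1, k1⟩ := ih (by omega)
    obtain ⟨m, rfl⟩ : ∃ l, m = l + 1 := ⟨m - 1, by omega⟩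
    obtain ⟨C2, h2, k2⟩ := GN_step hAM n hB m (by omega)
    refine ⟨C1 * C2, by positivity, fun f hf hfB => ?_⟩
    calc _ ≤ _ := k1 f hf hfB
      _ ≤ C1 * (C2 * _) := mul_le_mul_of_nonneg_left (k2 f hf hfB) h1.le
      _ = _ := by rw [mul_assoc]

/-- Gagliardo-Nirenberg on the cell, for functions bounded by `B`. -/
lemma GN {A₀ M : ℝ} (hAM : -A₀ < M) (n : ℕ) {B : ℝ} (hB : 0 ≤ B) :
    ∃ C : ℝ, 0 < C ∧ ∀ f : ℝ × ℝ × ℝ → ℝ, ContDiff ℝ (⊤ : ℕ∞) f →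
      (∀ x ∈ cell A₀ M, |f x| ≤ B) → ∀ j, 1 ≤ j → j ≤ n →
      JJ A₀ M j (2 * n / (j : ℝ)) f ≤ C * cellSobSq A₀ M n f := by
  have : ∀ j, ∃ C : ℝ, 0 < C ∧ (1 ≤ j → j ≤ n → ∀ f : ℝ × ℝ × ℝ → ℝ, ContDiff ℝ (⊤ : ℕ∞) f →
      (∀ x ∈ cell A₀ M, |f x| ≤ B) → 
      JJ A₀ M j (2 * n / (j : ℝ)) f ≤ C * cellSobSq A₀ M n f) := by
    intro j
    by_cases h : 1 ≤ j ∧ j ≤ n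
    · obtain ⟨C, hC, k⟩ := GN_chain hAM n hB h.1 n h.2 le_rfl
      refine ⟨C, hC, fun _ _ f hf hfB => ?_⟩
      have := k f hf hfB
      rwa [JJ_top A₀ M n (by omega)] at this
    · exact ⟨1, one_pos, fun h1 h2 => absurd ⟨h1, h2⟩ h⟩
  choose C hC h using this
  refine ⟨∑ j ∈ Finset.range (n + 1), C j, Finset.sum_pos (fun j _ => hC j) ⟨0, by simp⟩,
    fun f hf hfB j h1 h2 => (h j h1 h2 f hf hfB).trans ?_⟩
  apply mul_le_mul_of_nonneg_right
  · exact Finset.single_le_sum (f := C) (fun j _ => (hC j).le) (Finset.mem_range.2 (by omega))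
  · rw [← JJ_top A₀ M n (by omega)]; exact JJ_nonneg _ _ _ _ _

/-! ### Pointwise estimates -/

/-- Sum of absolute values of all derivatives of order `k`. -/
def DD : ℕ → (ℝ × ℝ × ℝ → ℝ) → ℝ × ℝ × ℝ → ℝ
  | 0, f, p => |f p|
  | k + 1, f, p => ∑ i : Fin 3, DD k (pd i f) p

lemma DD_nonneg : ∀ (k : ℕ) (f : ℝ × ℝ × ℝ → ℝ) (p : ℝ × ℝ × ℝ), 0 ≤ DD k f p
  | 0, _, _ => abs_nonneg _
  | k + 1, _, _ => Finset.sum_nonneg fun _ _ => DD_nonneg k _ _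

lemma DD_pd_le (k : ℕ) (f : ℝ × ℝ × ℝ → ℝ) (p : ℝ × ℝ × ℝ) (i : Fin 3) :
    DD k (pd i f) p ≤ DD (k + 1) f p :=
  Finset.single_le_sum (f := fun i => DD k (pd i f) p) (fun _ _ => DD_nonneg _ _ _)
    (Finset.mem_univ i)

lemma pdComp_snoc (f : ℝ × ℝ × ℝ → ℝ) (i : Fin 3) :
    ∀ {n : ℕ} (w : Fin n → Fin 3),
      pdComp (Fin.snoc w i : Fin (n + 1) → Fin 3) f = pdComp w (pd i f)
  | 0, w => by
    change pd ((Fin.snoc w i : Fin 1 → Fin 3) 0) f = pd i f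
    rfl
  | n + 1, w => by
    have ih := pdComp_snoc f i (fun j => w j.succ)
    change pd _ (pdComp _ f) = pd (w 0) (pdComp (fun j => w j.succ) (pd i f))
    rw [← ih]
    have e : (fun j : Fin (n + 1) => (Fin.snoc w i : Fin (n + 2) → Fin 3) j.succ) =
        (Fin.snoc (fun j => w j.succ) i : Fin (n + 1) → Fin 3) := by
      funext j
      refine Fin.lastCases ?_ (fun j => ?_) j
      · rw [Fin.succ_last]; simp
      · rw [Fin.succ_castSucc, Fin.snoc_castSucc (α := fun _ => Fin 3),
          Fin.snoc_castSucc (α := fun _ => Fin 3)]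
    rw [e]
    rfl

lemma DD_eq : ∀ (k : ℕ) (f : ℝ × ℝ × ℝ → ℝ) (p : ℝ × ℝ × ℝ),
    DD k f p = ∑ w : Fin k → Fin 3, |pdComp w f p|
  | 0, f, p => by simp [DD, pdComp]
  | k + 1, f, p => by
    have e := Fintype.sum_equiv (Fin.snocEquiv (fun _ : Fin (k + 1) => Fin 3))
      (fun x => |pdComp (Fin.snoc x.2 x.1 : Fin (k + 1) → Fin 3) f p|)
      (fun w => |pdComp w f p|) (fun x => rfl)
    rw [← e, Fintype.sum_prod_type]
    simp only [DD]
    refine Finset.sum_congr rfl fun i _ => ?_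
    rw [DD_eq k (pd i f) p]
    refine Finset.sum_congr rfl fun w _ => ?_
    rw [pdComp_snoc]

lemma DD_add (k : ℕ) : ∀ {f g : ℝ × ℝ × ℝ → ℝ}, ContDiff ℝ (⊤ : ℕ∞) f → ContDiff ℝ (⊤ : ℕ∞) g →
    ∀ p, DD k (fun p => f p + g p) p ≤ DD k f p + DD k g p := by
  induction k with
  | zero => intro f g _ _ p; exact abs_add_le _ _
  | succ k ih =>
    intro f g hf hg p
    simp only [DD]
    rw [← Finset.sum_add_distrib]
    refine Finset.sum_le_sum fun i _ => ?_
    rw [pd_add hf hg]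
    exact ih (pd_smooth hf i) (pd_smooth hg i) p

lemma pd_const_mul {f : ℝ × ℝ × ℝ → ℝ} (c : ℝ) (hf : ContDiff ℝ (⊤ : ℕ∞) f)
    (i : Fin 3) : pd i (fun p => c * f p) = fun p => c * pd i f p := by
  funext p
  rw [pd_eq (contDiff_const.mul hf), pd_eq hf, fderiv_const_mul (hf.differentiable (by simp) p)]
  rfl

lemma DD_const_mul (c : ℝ) (k : ℕ) : ∀ {f : ℝ × ℝ × ℝ → ℝ}, ContDiff ℝ (⊤ : ℕ∞) f →
    ∀ p, DD k (fun p => c * f p) p = |c| * DD k f p := by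
  induction k with
  | zero => intro f _ p; exact abs_mul _ _
  | succ k ih =>
    intro f hf p
    simp only [DD]
    rw [Finset.mul_sum]
    refine Finset.sum_congr rfl fun i _ => ?_
    rw [pd_const_mul c hf]
    exact ih (pd_smooth hf i) p

lemma DD_le_add (k : ℕ) {f g : ℝ × ℝ × ℝ → ℝ} (hf : ContDiff ℝ (⊤ : ℕ∞) f)
    (hg : ContDiff ℝ (⊤ : ℕ∞) g) (p : ℝ × ℝ × ℝ) :
    DD k f p ≤ DD k (fun p => f p + g p) p + DD k g p := by
  have h := DD_add k (hf.add hg) (contDiff_const.mul hg : ContDiff ℝ (⊤ : ℕ∞) fun p => (-1) * g p) p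
  rw [DD_const_mul (-1) k hg] at h
  have e : (fun p => f p + g p + -1 * g p) = f := by funext p; ring
  rw [e] at h
  simpa using h

lemma DD_mul (k : ℕ) : ∀ {f g : ℝ × ℝ × ℝ → ℝ}, ContDiff ℝ (⊤ : ℕ∞) f → ContDiff ℝ (⊤ : ℕ∞) g →
    ∀ p, DD k (fun p => f p * g p) p ≤
      2 ^ k * ∑ x ∈ Finset.HasAntidiagonal.antidiagonal k, DD x.1 f p * DD x.2 g p := by
  induction k with
  | zero => intro f g _ _ p; simp [DD, abs_mul]
  | succ k ih =>
    intro f g hf hg p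
    have hstep : ∀ i, DD k (pd i (fun p => f p * g p)) p ≤
        2 ^ k * (∑ x ∈ Finset.HasAntidiagonal.antidiagonal k, DD x.1 (pd i f) p * DD x.2 g p) +
        2 ^ k * (∑ x ∈ Finset.HasAntidiagonal.antidiagonal k, DD x.1 f p * DD x.2 (pd i g) p) := by
      intro i
      rw [pd_mul hf hg]
      exact (DD_add k ((pd_smooth hf i).mul hg) (hf.mul (pd_smooth hg i)) p).trans
        (add_le_add (ih (pd_smooth hf i) hg p) (ih hf (pd_smooth hg i) p))
    have h1 : ∑ x ∈ Finset.HasAntidiagonal.antidiagonal k, DD (x.1 + 1) f p * DD x.2 g p ≤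
        ∑ x ∈ Finset.HasAntidiagonal.antidiagonal (k + 1), DD x.1 f p * DD x.2 g p := by
      rw [Finset.Nat.sum_antidiagonal_succ (f := fun x : ℕ × ℕ => DD x.1 f p * DD x.2 g p)]
      exact le_add_of_nonneg_left (mul_nonneg (DD_nonneg _ _ _) (DD_nonneg _ _ _))
    have h2 : ∑ x ∈ Finset.HasAntidiagonal.antidiagonal k, DD x.1 f p * DD (x.2 + 1) g p ≤
        ∑ x ∈ Finset.HasAntidiagonal.antidiagonal (k + 1), DD x.1 f p * DD x.2 g p := by
      rw [Finset.Nat.sum_antidiagonal_succ' (f := fun x : ℕ × ℕ => DD x.1 f p * DD x.2 g p)]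
      exact le_add_of_nonneg_left (mul_nonneg (DD_nonneg _ _ _) (DD_nonneg _ _ _))
    calc DD (k + 1) (fun p => f p * g p) p ≤ ∑ i : Fin 3,
          (2 ^ k * (∑ x ∈ Finset.HasAntidiagonal.antidiagonal k, DD x.1 (pd i f) p * DD x.2 g p) +
          2 ^ k * (∑ x ∈ Finset.HasAntidiagonal.antidiagonal k, DD x.1 f p * DD x.2 (pd i g) p)) :=
          Finset.sum_le_sum fun i _ => hstep i
      _ = 2 ^ k * (∑ x ∈ Finset.HasAntidiagonal.antidiagonal k, DD (x.1 + 1) f p * DD x.2 g p) +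
          2 ^ k * (∑ x ∈ Finset.HasAntidiagonal.antidiagonal k, DD x.1 f p * DD (x.2 + 1) g p) := by
          rw [Finset.sum_add_distrib, ← Finset.mul_sum, ← Finset.mul_sum, Finset.sum_comm,
            Finset.sum_comm (s := Finset.univ)]
          simp only [DD, Finset.sum_mul, Finset.mul_sum]
      _ ≤ 2 ^ k * (∑ x ∈ Finset.HasAntidiagonal.antidiagonal (k + 1), DD x.1 f p * DD x.2 g p) +
          2 ^ k * (∑ x ∈ Finset.HasAntidiagonal.antidiagonal (k + 1), DD x.1 f p * DD x.2 g p) := by gcongr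
      _ = _ := by ring

/-- Weighted sums of derivatives. -/
def UU (r : ℝ) (u : ℝ × ℝ × ℝ → ℝ) (p : ℝ × ℝ × ℝ) (n : ℕ) : ℝ :=
  ∑ j ∈ Finset.range (n + 1), r ^ (n - j) * DD j u p

def VV (r : ℝ) (u : ℝ × ℝ × ℝ → ℝ) (p : ℝ × ℝ × ℝ) (n : ℕ) : ℝ :=
  ∑ j ∈ Finset.range n, r ^ (n - j) * DD j u p

lemma UU_nonneg {r : ℝ} (hr : 0 ≤ r) (u p n) : 0 ≤ UU r u p n :=
  Finset.sum_nonneg fun _ _ => mul_nonneg (pow_nonneg hr _) (DD_nonneg _ _ _)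

lemma VV_nonneg {r : ℝ} (hr : 0 ≤ r) (u p n) : 0 ≤ VV r u p n :=
  Finset.sum_nonneg fun _ _ => mul_nonneg (pow_nonneg hr _) (DD_nonneg _ _ _)

lemma pow_UU_le {r : ℝ} (hr : 0 ≤ r) (u p) (i m : ℕ) : r ^ i * UU r u p m ≤ UU r u p (i + m) := by
  unfold UU
  rw [Finset.mul_sum]
  calc _ = ∑ j ∈ Finset.range (m + 1), r ^ (i + m - j) * DD j u p := by
        refine Finset.sum_congr rfl fun j hj => ?_
        have := Finset.mem_range.1 hj
        rw [← mul_assoc, ← pow_add]; congr 2; omega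
    _ ≤ _ := Finset.sum_le_sum_of_subset_of_nonneg
        (Finset.range_subset_range.2 (by omega))
        (fun _ _ _ => mul_nonneg (pow_nonneg hr _) (DD_nonneg _ _ _))

lemma pow_UU_le_VV {r : ℝ} (hr : 0 ≤ r) (u p) (i m : ℕ) (hi : 1 ≤ i) :
    r ^ i * UU r u p m ≤ VV r u p (i + m) := by
  unfold UU VV
  rw [Finset.mul_sum]
  calc _ = ∑ j ∈ Finset.range (m + 1), r ^ (i + m - j) * DD j u p := by
        refine Finset.sum_congr rfl fun j hj => ?_
        have := Finset.mem_range.1 hj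
        rw [← mul_assoc, ← pow_add]; congr 2; omega
    _ ≤ _ := Finset.sum_le_sum_of_subset_of_nonneg
        (Finset.range_subset_range.2 (by omega))
        (fun _ _ _ => mul_nonneg (pow_nonneg hr _) (DD_nonneg _ _ _))

lemma DD_le_UU {r : ℝ} (hr : 0 ≤ r) (u p n) : DD n u p ≤ UU r u p n := by
  have := Finset.single_le_sum (f := fun j => r ^ (n - j) * DD j u p) (s := Finset.range (n + 1))
    (fun _ _ => mul_nonneg (pow_nonneg hr _) (DD_nonneg _ _ _)) (Finset.mem_range.2 n.lt_succ_self)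
  simpa [UU] using this

lemma mul_bound {k N : ℕ} (hkN : k ≤ N) {T K : ℝ} {f g : ℝ × ℝ × ℝ → ℝ}
    (hf : ContDiff ℝ (⊤ : ℕ∞) f) (hg : ContDiff ℝ (⊤ : ℕ∞) g) (p : ℝ × ℝ × ℝ) (hT : 0 ≤ T)
    (hK : 0 ≤ K)
    (h : ∀ i j, i + j = k → DD i f p * DD j g p ≤ K * T) :
    DD k (fun p => f p * g p) p ≤ 2 ^ N * (N + 1) * K * T := by
  calc _ ≤ _ := DD_mul k hf hg p
    _ ≤ 2 ^ k * ∑ x ∈ Finset.HasAntidiagonal.antidiagonal k, K * T := by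
      refine mul_le_mul_of_nonneg_left (Finset.sum_le_sum fun x hx => ?_) (by positivity)
      exact h _ _ (Finset.HasAntidiagonal.mem_antidiagonal.1 hx)
    _ = 2 ^ k * (k + 1) * K * T := by
      rw [Finset.sum_const, Finset.Nat.card_antidiagonal, nsmul_eq_mul]; push_cast; ring
    _ ≤ _ := by
      have : (k:ℝ) ≤ N := by exact_mod_cast hkN
      gcongr
      norm_num

lemma fieldLetter_smooth {ε : ℝ} {z0 s0 g : ℝ × ℝ × ℝ → ℝ} (hz : ContDiff ℝ (⊤ : ℕ∞) z0)
    (hs : ContDiff ℝ (⊤ : ℕ∞) s0) (hg : ContDiff ℝ (⊤ : ℕ∞) g) (i : Fin 3) :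
    ContDiff ℝ (⊤ : ℕ∞) (fieldLetter ε z0 s0 i g) := by
  fin_cases i
  · exact (pd_smooth hg 2).add ((contDiff_const.mul hz).mul (pd_smooth hg 1))
  · exact (pd_smooth hg 0).add ((contDiff_const.mul hs).mul (pd_smooth hg 2))
  · exact pd_smooth hg 1

lemma fieldComp_smooth {ε : ℝ} {z0 s0 u : ℝ × ℝ × ℝ → ℝ} (hz : ContDiff ℝ (⊤ : ℕ∞) z0)
    (hs : ContDiff ℝ (⊤ : ℕ∞) s0) (hu : ContDiff ℝ (⊤ : ℕ∞) u) :
    ∀ {n : ℕ} (w : Fin n → Fin 3), ContDiff ℝ (⊤ : ℕ∞) (fieldComp ε z0 s0 w u)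
  | 0, _ => hu
  | _ + 1, w => fieldLetter_smooth hz hs (fieldComp_smooth hz hs hu (fun j => w j.succ)) (w 0)

/-- Pointwise hypotheses. -/
structure PtHyp (N : ℕ) (K ε : ℝ) (z0 s0 u : ℝ × ℝ × ℝ → ℝ) (p : ℝ × ℝ × ℝ) (r : ℝ) : Prop where
  hz : ContDiff ℝ (⊤ : ℕ∞) z0
  hs : ContDiff ℝ (⊤ : ℕ∞) s0
  hu : ContDiff ℝ (⊤ : ℕ∞) u
  hr : 0 ≤ r
  ha : ∀ i ≤ N, DD i (fun p => ε * z0 p) p ≤ K * r ^ i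
  hb : ∀ i ≤ N, DD i (fun p => ε * s0 p) p ≤ K * r ^ i

lemma claimA (N : ℕ) {K : ℝ} (hK : 0 ≤ K) (n : ℕ) :
    ∃ C : ℝ, 0 ≤ C ∧ ∀ k, k + n ≤ N → ∀ ε z0 s0 u p r, PtHyp N K ε z0 s0 u p r →
      ∀ w : Fin n → Fin 3, DD k (fieldComp ε z0 s0 w u) p ≤ C * UU r u p (k + n) := by
  induction n with
  | zero =>
    refine ⟨1, zero_le_one, fun k _ ε z0 s0 u p r h w => ?_⟩
    rw [one_mul]; exact DD_le_UU h.hr u p k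
  | succ n ih =>
    obtain ⟨C, hC, ih⟩ := ih
    refine ⟨C + 2 ^ N * (N + 1) * K * C, by positivity, fun k hk ε z0 s0 u p r h w => ?_⟩
    set g := fieldComp ε z0 s0 (fun j => w j.succ) u with hg
    have sg : ContDiff ℝ (⊤ : ℕ∞) g := fieldComp_smooth h.hz h.hs h.hu _
    have U0 := UU_nonneg h.hr u p (k + (n + 1))
    have base : ∀ i, ∀ j ≤ k, DD j (pd i g) p ≤ C * UU r u p (j + (n + 1)) := by
      intro i j hj
      refine (DD_pd_le j g p i).trans ?_
      have := ih (j + 1) (by omega) ε z0 s0 u p r h (fun j => w j.succ)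
      rwa [show j + (n + 1) = j + 1 + n by ring]
    have prod : ∀ (c : ℝ × ℝ × ℝ → ℝ) (i : Fin 3), ContDiff ℝ (⊤ : ℕ∞) c →
        (∀ i ≤ N, DD i c p ≤ K * r ^ i) →
        DD k (fun p => c p * pd i g p) p ≤ 2 ^ N * (N + 1) * K * (C * UU r u p (k + (n + 1))) := by
      intro c i sc hc
      refine mul_bound (by omega) sc (pd_smooth sg i) p (by positivity) hK fun l j hlj => ?_
      calc DD l c p * DD j (pd i g) p ≤ (K * r ^ l) * (C * UU r u p (j + (n + 1))) :=
            mul_le_mul (hc l (by omega)) (base i j (by omega)) (DD_nonneg _ _ _)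
              (mul_nonneg hK (pow_nonneg h.hr _))
        _ = K * C * (r ^ l * UU r u p (j + (n + 1))) := by ring
        _ ≤ K * C * UU r u p (l + (j + (n + 1))) :=
            mul_le_mul_of_nonneg_left (pow_UU_le h.hr u p _ _) (by positivity)
        _ = _ := by rw [← add_assoc, hlj]; ring
    change DD k (fieldLetter ε z0 s0 (w 0) g) p ≤ _
    have hP : 0 ≤ 2 ^ N * (N + 1) * K * (C * UU r u p (k + (n + 1))) := by positivity
    generalize w 0 = i
    fin_cases i
    · have := DD_add k (pd_smooth sg 2) ((contDiff_const.mul h.hz).mul (pd_smooth sg 1) :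
        ContDiff ℝ (⊤ : ℕ∞) fun p => ε * z0 p * pd 1 g p) p
      have t1 := base 2 k le_rfl
      have t2 := prod (fun p => ε * z0 p) 1 (contDiff_const.mul h.hz) h.ha
      change DD k (fun p => pd 2 g p + ε * z0 p * pd 1 g p) p ≤ _
      linarith
    · have := DD_add k (pd_smooth sg 0) ((contDiff_const.mul h.hs).mul (pd_smooth sg 2) :
        ContDiff ℝ (⊤ : ℕ∞) fun p => ε * s0 p * pd 2 g p) p
      have t1 := base 0 k le_rfl
      have t2 := prod (fun p => ε * s0 p) 2 (contDiff_const.mul h.hs) h.hb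
      change DD k (fun p => pd 0 g p + ε * s0 p * pd 2 g p) p ≤ _
      linarith
    · have t1 := base 1 k le_rfl
      change DD k (pd 1 g) p ≤ _
      linarith

/-- Sum over words of length `n` of the field derivatives. -/
def GG (ε : ℝ) (z0 s0 u : ℝ × ℝ × ℝ → ℝ) (p : ℝ × ℝ × ℝ) (n : ℕ) : ℝ :=
  ∑ w : Fin n → Fin 3, |fieldComp ε z0 s0 w u p|

lemma claimB (N : ℕ) {K : ℝ} (hK : 0 ≤ K) (k : ℕ) :
    ∃ C : ℝ, 0 ≤ C ∧ ∀ n, k + n ≤ N → ∀ ε z0 s0 u p r, PtHyp N K ε z0 s0 u p r →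
      ∀ w : Fin n → Fin 3, DD k (fieldComp ε z0 s0 w u) p ≤
        C * (GG ε z0 s0 u p (k + n) + VV r u p (k + n)) := by
  induction k with
  | zero =>
    refine ⟨1, zero_le_one, fun n _ ε z0 s0 u p r h w => ?_⟩
    have := VV_nonneg h.hr u p (0 + n)
    have h2 : |fieldComp ε z0 s0 w u p| ≤ GG ε z0 s0 u p n :=
      Finset.single_le_sum (f := fun w : Fin n → Fin 3 => |fieldComp ε z0 s0 w u p|)
        (fun _ _ => abs_nonneg _) (Finset.mem_univ w)
    rw [zero_add] at this ⊢
    change |fieldComp ε z0 s0 w u p| ≤ _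
    linarith
  | succ k ih =>
    obtain ⟨C, hC, ih⟩ := ih
    choose CA hCA hA using fun n => claimA N hK n
    set CS := ∑ n ∈ Finset.range (N + 1), CA n with hCS
    have hCS0 : 0 ≤ CS := Finset.sum_nonneg fun _ _ => hCA _
    have hCle : ∀ n ≤ N, CA n ≤ CS := fun n hn =>
      Finset.single_le_sum (f := CA) (fun _ _ => hCA _) (Finset.mem_range.2 (by omega))
    set L : ℝ := 2 ^ N * (N + 1) * K with hL
    have hL0 : 0 ≤ L := by positivity
    set C2 := C + L * (C + CS) with hC2
    set C3 := C + L * (C2 + CS) with hC3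
    have hC20 : 0 ≤ C2 := by positivity
    have hC30 : 0 ≤ C3 := by positivity
    refine ⟨C + C2 + C3, by positivity, fun n hn ε z0 s0 u p r h w => ?_⟩
    set g := fieldComp ε z0 s0 w u with hg
    have sg : ContDiff ℝ (⊤ : ℕ∞) g := fieldComp_smooth h.hz h.hs h.hu _
    have V0 := VV_nonneg h.hr u p (k + 1 + n)
    have G0 : 0 ≤ GG ε z0 s0 u p (k + 1 + n) := Finset.sum_nonneg fun _ _ => abs_nonneg _
    set X := GG ε z0 s0 u p (k + 1 + n) + VV r u p (k + 1 + n) with hX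
    have X0 : 0 ≤ X := by positivity
    have letB : ∀ i, DD k (fieldLetter ε z0 s0 i g) p ≤ C * X := by
      intro i
      have := ih (n + 1) (by omega) ε z0 s0 u p r h (Fin.cons i w : Fin (n + 1) → Fin 3)
      rw [show k + (n + 1) = k + 1 + n by ring] at this
      exact this
    have low : ∀ i, ∀ j ≤ k, DD j (pd i g) p ≤ CS * UU r u p (j + 1 + n) := by
      intro i j hj
      refine (DD_pd_le j g p i).trans ((hA n (j + 1) (by omega) ε z0 s0 u p r h w).trans ?_)
      exact mul_le_mul_of_nonneg_right (hCle n (by omega)) (UU_nonneg h.hr _ _ _)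
    have prod : ∀ (c : ℝ × ℝ × ℝ → ℝ) (i : Fin 3) (Y : ℝ), 0 ≤ Y → ContDiff ℝ (⊤ : ℕ∞) c →
        (∀ i ≤ N, DD i c p ≤ K * r ^ i) → DD k (pd i g) p ≤ Y * X →
        DD k (fun p => c p * pd i g p) p ≤ L * ((Y + CS) * X) := by
      intro c i Y hY sc hc hYX
      refine mul_bound (by omega) sc (pd_smooth sg i) p (by positivity) hK fun l j hlj => ?_
      rcases Nat.eq_zero_or_pos l with rfl | hl
      · rw [zero_add] at hlj; subst hlj
        have := hc 0 (by omega)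
        rw [pow_zero, mul_one] at this
        calc _ ≤ K * (Y * X) := mul_le_mul this hYX (DD_nonneg _ _ _) hK
          _ ≤ _ := by
            apply mul_le_mul_of_nonneg_left _ hK
            have : 0 ≤ CS * X := by positivity
            linarith
      · calc DD l c p * DD j (pd i g) p ≤ (K * r ^ l) * (CS * UU r u p (j + 1 + n)) :=
            mul_le_mul (hc l (by omega)) (low i j (by omega)) (DD_nonneg _ _ _)
              (mul_nonneg hK (pow_nonneg h.hr _))
          _ = K * (CS * (r ^ l * UU r u p (j + 1 + n))) := by ring
          _ ≤ K * (CS * VV r u p (l + (j + 1 + n))) := by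
            have := pow_UU_le_VV h.hr u p l (j + 1 + n) hl
            gcongr
          _ ≤ K * ((Y + CS) * X) := by
            rw [show l + (j + 1 + n) = k + 1 + n by omega]
            apply mul_le_mul_of_nonneg_left _ hK
            have t1 : 0 ≤ Y * X := by positivity
            have t2 : CS * VV r u p (k + 1 + n) ≤ CS * X :=
              mul_le_mul_of_nonneg_left (by linarith) hCS0
            linarith
    have d1 : DD k (pd 1 g) p ≤ C * X := letB 2
    have d2 : DD k (pd 2 g) p ≤ C2 * X := by
      have t := DD_le_add k (pd_smooth sg 2) ((contDiff_const.mul h.hz).mul (pd_smooth sg 1) :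
        ContDiff ℝ (⊤ : ℕ∞) fun p => ε * z0 p * pd 1 g p) p
      have t1 := prod (fun p => ε * z0 p) 1 C hC (contDiff_const.mul h.hz) h.ha d1
      have t2 := letB 0
      change DD k (fun p => pd 2 g p + ε * z0 p * pd 1 g p) p ≤ _ at t2
      rw [hC2]; linarith
    have d0 : DD k (pd 0 g) p ≤ C3 * X := by
      have t := DD_le_add k (pd_smooth sg 0) ((contDiff_const.mul h.hs).mul (pd_smooth sg 2) :
        ContDiff ℝ (⊤ : ℕ∞) fun p => ε * s0 p * pd 2 g p) p
      have t1 := prod (fun p => ε * s0 p) 2 C2 hC20 (contDiff_const.mul h.hs) h.hb d2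
      have t2 := letB 1
      change DD k (fun p => pd 0 g p + ε * s0 p * pd 2 g p) p ≤ _ at t2
      rw [hC3]; linarith
    change ∑ i : Fin 3, DD k (pd i g) p ≤ _
    rw [Fin.sum_univ_three]
    linarith

/-! ### Integral estimates -/

lemma cellSob_nonneg (A₀ M : ℝ) (n : ℕ) (u : ℝ × ℝ × ℝ → ℝ) : 0 ≤ cellSobSq A₀ M n u :=
  Finset.sum_nonneg fun _ _ => Finset.sum_nonneg fun _ _ => integral_nonneg fun _ => sq_nonneg _

lemma cellSob_mono (A₀ M : ℝ) {m n : ℕ} (h : m ≤ n) (u : ℝ × ℝ × ℝ → ℝ) :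
    cellSobSq A₀ M m u ≤ cellSobSq A₀ M n u :=
  Finset.sum_le_sum_of_subset_of_nonneg (Finset.range_subset_range.2 (by omega))
    fun _ _ _ => Finset.sum_nonneg fun _ _ => integral_nonneg fun _ => sq_nonneg _

lemma pdComp_const_mul (c : ℝ) {f : ℝ × ℝ × ℝ → ℝ} (hf : ContDiff ℝ (⊤ : ℕ∞) f) :
    ∀ {n : ℕ} (w : Fin n → Fin 3), pdComp w (fun p => c * f p) = fun p => c * pdComp w f p
  | 0, _ => rfl
  | n + 1, w => by
    change pd (w 0) (pdComp (fun j => w j.succ) (fun p => c * f p)) = _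
    rw [pdComp_const_mul c hf, pd_const_mul c (pdComp_smooth hf _)]
    rfl

lemma cellSob_const_mul (A₀ M : ℝ) (n : ℕ) (c : ℝ) {f : ℝ × ℝ × ℝ → ℝ}
    (hf : ContDiff ℝ (⊤ : ℕ∞) f) :
    cellSobSq A₀ M n (fun p => c * f p) = c ^ 2 * cellSobSq A₀ M n f := by
  unfold cellSobSq
  simp only [Finset.mul_sum]
  refine Finset.sum_congr rfl fun i _ => Finset.sum_congr rfl fun w _ => ?_
  rw [pdComp_const_mul c hf, ← integral_const_mul]
  simp only [mul_pow]

lemma DD_cont {f : ℝ × ℝ × ℝ → ℝ} (hf : ContDiff ℝ (⊤ : ℕ∞) f) (k : ℕ) :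
    Continuous fun p => DD k f p := by
  simp only [DD_eq]
  exact continuous_finsetSum _ fun w _ => (pdComp_smooth hf w).continuous.abs

lemma DD_rpow_cont {f : ℝ × ℝ × ℝ → ℝ} (hf : ContDiff ℝ (⊤ : ℕ∞) f) (k : ℕ) {e : ℝ}
    (he : 0 ≤ e) : Continuous fun p => DD k f p ^ e :=
  (DD_cont hf k).rpow_const fun _ => Or.inr he

lemma R2 {A₀ M : ℝ} (hAM : -A₀ < M) (n j : ℕ) (hj : 1 ≤ j) (hjn : j ≤ n) {B : ℝ} (hB : 0 ≤ B) :
    ∃ C : ℝ, 0 < C ∧ ∀ f : ℝ × ℝ × ℝ → ℝ, ContDiff ℝ (⊤ : ℕ∞) f →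
      (∀ x ∈ cell A₀ M, |f x| ≤ B) →
      ∫ p in cell A₀ M, DD j f p ^ (2 * n / (j : ℝ)) ≤ C * cellSobSq A₀ M n f := by
  obtain ⟨C, hC, h⟩ := GN hAM n hB
  have hj0 : (0:ℝ) < j := by exact_mod_cast hj
  have hjn' : (j:ℝ) ≤ n := by exact_mod_cast hjn
  have he : 1 ≤ 2 * n / (j : ℝ) := by rw [le_div_iff₀ hj0]; linarith
  generalize hE : 2 * n / (j : ℝ) = e at *
  obtain ⟨c, hc⟩ : ∃ c : ℝ, c = ((Finset.univ : Finset (Fin j → Fin 3)).card : ℝ) := ⟨_, rfl⟩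
  have hc0 : 0 < c := by rw [hc]; exact_mod_cast Finset.card_pos.2 Finset.univ_nonempty
  refine ⟨c ^ (e - 1) * (c * C), by positivity, fun f hf hfB => ?_⟩
  have hh := h f hf hfB j hj hjn
  rw [hE] at hh
  have e0 : 0 ≤ e := by linarith
  calc ∫ p in cell A₀ M, DD j f p ^ e
      ≤ ∫ p in cell A₀ M, c ^ (e - 1) * ∑ w : Fin j → Fin 3, |pdComp w f p| ^ e := by
        apply setIntegral_mono_on (cell_intg _ _ (DD_rpow_cont hf j e0)) (cell_intg _ _ _)
          (cell_meas _ _)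
        · intro p _
          rw [DD_eq, hc]
          exact Real.rpow_sum_le_const_mul_sum_rpow _ _ he
        · exact continuous_const.mul (continuous_finsetSum _ fun w _ =>
            cont_abs_rpow (pdComp_smooth hf w).continuous e0)
    _ = c ^ (e - 1) * ∑ w : Fin j → Fin 3, ∫ p in cell A₀ M, |pdComp w f p| ^ e := by
        rw [integral_const_mul, integral_finsetSum]
        exact fun w _ => cell_intg _ _ (cont_abs_rpow (pdComp_smooth hf w).continuous e0)
    _ ≤ c ^ (e - 1) * ∑ w : Fin j → Fin 3, C * cellSobSq A₀ M n f := by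
        refine mul_le_mul_of_nonneg_left (Finset.sum_le_sum fun w _ => ?_) (by positivity)
        exact (JJ_term A₀ M le_rfl e f w).trans hh
    _ = _ := by rw [Finset.sum_const, nsmul_eq_mul, ← hc]; ring

/-- The local radius attached to one coefficient. -/
def r1 (n : ℕ) (a : ℝ × ℝ × ℝ → ℝ) (p : ℝ × ℝ × ℝ) : ℝ :=
  ∑ i ∈ Finset.range n, DD (i + 1) a p ^ (1 / ((i + 1 : ℕ) : ℝ))

lemma r1_nonneg (n a p) : 0 ≤ r1 n a p :=
  Finset.sum_nonneg fun _ _ => Real.rpow_nonneg (DD_nonneg _ _ _) _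

lemma r1_cont {a : ℝ × ℝ × ℝ → ℝ} (ha : ContDiff ℝ (⊤ : ℕ∞) a) (n : ℕ) :
    Continuous fun p => r1 n a p :=
  continuous_finsetSum _ fun _ _ => DD_rpow_cont ha _ (by positivity)

lemma DD_le_r1 (n : ℕ) (a p) (i : ℕ) (hi : 1 ≤ i) (hin : i ≤ n) : DD i a p ≤ r1 n a p ^ i := by
  obtain ⟨k, rfl⟩ : ∃ k, i = k + 1 := ⟨i - 1, by omega⟩
  have h : DD (k + 1) a p ^ (1 / ((k + 1 : ℕ) : ℝ)) ≤ r1 n a p :=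
    Finset.single_le_sum (f := fun i => DD (i + 1) a p ^ (1 / ((i + 1 : ℕ) : ℝ)))
      (fun _ _ => Real.rpow_nonneg (DD_nonneg _ _ _) _) (Finset.mem_range.2 (by omega))
  have h2 := pow_le_pow_left₀ (Real.rpow_nonneg (DD_nonneg _ _ _) _) h (k + 1)
  rwa [one_div, Real.rpow_inv_natCast_pow (DD_nonneg _ _ _) (by omega)] at h2

lemma R1 {A₀ M : ℝ} (hAM : -A₀ < M) (n : ℕ) (hn : 1 ≤ n) {B : ℝ} (hB : 0 ≤ B) :
    ∃ C : ℝ, 0 < C ∧ ∀ f : ℝ × ℝ × ℝ → ℝ, ContDiff ℝ (⊤ : ℕ∞) f →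
      (∀ x ∈ cell A₀ M, |f x| ≤ B) →
      ∫ p in cell A₀ M, r1 n f p ^ (2 * n) ≤ C * cellSobSq A₀ M n f := by
  have H : ∀ i : ℕ, ∃ C : ℝ, 0 < C ∧ (i < n → ∀ f : ℝ × ℝ × ℝ → ℝ, ContDiff ℝ (⊤ : ℕ∞) f →
      (∀ x ∈ cell A₀ M, |f x| ≤ B) →
      ∫ p in cell A₀ M, DD (i + 1) f p ^ (2 * n / ((i + 1 : ℕ) : ℝ)) ≤ C * cellSobSq A₀ M n f) := by
    intro i
    by_cases h : i < n
    · obtain ⟨C, hC, h⟩ := R2 hAM n (i + 1) (by omega) (by omega) hB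
      exact ⟨C, hC, fun _ => h⟩
    · exact ⟨1, one_pos, fun h' => absurd h' h⟩
  choose C hC H using H
  have hn0 : (1:ℝ) ≤ n := by exact_mod_cast hn
  refine ⟨(n:ℝ) ^ (2 * (n:ℝ) - 1) * ∑ i ∈ Finset.range n, C i,
    mul_pos (by positivity) (Finset.sum_pos (fun i _ => hC i) ⟨0, Finset.mem_range.2 (by omega)⟩),
    fun f hf hfB => ?_⟩
  have hci : ∀ i : ℕ, Continuous fun p => DD (i + 1) f p ^ (2 * n / ((i + 1 : ℕ) : ℝ)) :=
    fun i => DD_rpow_cont hf _ (by positivity)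
  calc ∫ p in cell A₀ M, r1 n f p ^ (2 * n)
      ≤ ∫ p in cell A₀ M, (n:ℝ) ^ (2 * (n:ℝ) - 1) *
          ∑ i ∈ Finset.range n, DD (i + 1) f p ^ (2 * n / ((i + 1 : ℕ) : ℝ)) := by
        apply setIntegral_mono_on (cell_intg _ _ ((r1_cont hf n).pow _)) (cell_intg _ _ _)
          (cell_meas _ _)
        · intro p _
          have := Real.rpow_sum_le_const_mul_sum_rpow (Finset.range n)
            (fun i => DD (i + 1) f p ^ (1 / ((i + 1 : ℕ) : ℝ))) (p := 2 * (n:ℝ)) (by linarith)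
          have e0 : ∀ i, 0 ≤ DD (i + 1) f p ^ (1 / ((i + 1 : ℕ) : ℝ)) :=
            fun i => Real.rpow_nonneg (DD_nonneg _ _ _) _
          simp only [abs_of_nonneg (e0 _), Finset.card_range] at this
          change r1 n f p ^ (2 * n) ≤ _
          rw [← Real.rpow_natCast]
          push_cast at this ⊢
          refine le_trans ?_ (this.trans (le_of_eq ?_))
          · apply le_of_eq; unfold r1; push_cast; rfl
          · congr 1
            refine Finset.sum_congr rfl fun i _ => ?_
            rw [← Real.rpow_mul (DD_nonneg _ _ _)]
            congr 1; ring
        · exact continuous_const.mul (continuous_finsetSum _ fun i _ => hci i)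
    _ = (n:ℝ) ^ (2 * (n:ℝ) - 1) * ∑ i ∈ Finset.range n,
          ∫ p in cell A₀ M, DD (i + 1) f p ^ (2 * n / ((i + 1 : ℕ) : ℝ)) := by
        rw [integral_const_mul, integral_finsetSum]
        exact fun i _ => cell_intg _ _ (hci i)
    _ ≤ (n:ℝ) ^ (2 * (n:ℝ) - 1) * ∑ i ∈ Finset.range n, C i * cellSobSq A₀ M n f := by
        refine mul_le_mul_of_nonneg_left (Finset.sum_le_sum fun i hi => ?_) (by positivity)
        exact H i (Finset.mem_range.1 hi) f hf hfB
    _ = _ := by rw [← Finset.sum_mul]; ring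

/-- The interpolation lemma for one mixed term. -/
lemma WW {A₀ M : ℝ} (hAM : -A₀ < M) (n j : ℕ) (hjn : j < n) {δ : ℝ} (hδ : 0 < δ) :
    ∃ C : ℝ, 0 ≤ C ∧ ∀ (u R : ℝ × ℝ × ℝ → ℝ) (m : ℝ), ContDiff ℝ (⊤ : ℕ∞) u → Continuous R →
      (∀ p, 0 ≤ R p) → 0 < m → (∀ x ∈ cell A₀ M, |u x| ≤ m) →
      ∫ p in cell A₀ M, (R p ^ (n - j) * DD j u p) ^ 2 ≤
        δ * cellSobSq A₀ M n u + C * m ^ 2 * ∫ p in cell A₀ M, R p ^ (2 * n) := by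
  rcases Nat.eq_zero_or_pos j with rfl | hj
  · refine ⟨1, zero_le_one, fun u R m hu hR hR0 hm hum => ?_⟩
    have S0 := cellSob_nonneg A₀ M n u
    have : ∫ p in cell A₀ M, (R p ^ (n - 0) * DD 0 u p) ^ 2 ≤
        ∫ p in cell A₀ M, m ^ 2 * R p ^ (2 * n) := by
      apply setIntegral_mono_on (cell_intg _ _ _) (cell_intg _ _ _) (cell_meas _ _)
      · intro p hp
        have h1 := hum p hp
        have h2 : |u p| ^ 2 ≤ m ^ 2 := pow_le_pow_left₀ (abs_nonneg _) h1 2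
        have h3 : 0 ≤ R p ^ (2 * n) := pow_nonneg (hR0 p) _
        change (R p ^ (n - 0) * |u p|) ^ 2 ≤ _
        rw [Nat.sub_zero, mul_pow, ← pow_mul, mul_comm n 2, mul_comm]
        exact mul_le_mul_of_nonneg_right h2 h3
      · exact ((hR.pow _).mul (DD_cont hu 0)).pow 2
      · exact continuous_const.mul (hR.pow _)
    rw [integral_const_mul] at this
    have : 0 ≤ δ * cellSobSq A₀ M n u := by positivity
    linarith
  · obtain ⟨C2, hC2, h2⟩ := R2 hAM n j hj hjn.le zero_le_one
    have hj0 : (0:ℝ) < j := by exact_mod_cast hj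
    have hjn' : (j:ℝ) < n := by exact_mod_cast hjn
    have hn0 : (0:ℝ) < n := by linarith
    have hd0 : (0:ℝ) < n - j := by linarith
    have hPQ : ((n:ℝ) / j).HolderConjugate (n / (n - j)) := by
      rw [Real.holderConjugate_iff]
      refine ⟨by rw [lt_div_iff₀ hj0]; linarith, ?_⟩
      rw [inv_div, inv_div]; field_simp; ring
    obtain ⟨C, hC, hy⟩ := young_small hPQ (show 0 < δ / C2 by positivity)
    refine ⟨C, hC.le, fun u R m hu hR hR0 hm hum => ?_⟩
    have hv : ContDiff ℝ (⊤ : ℕ∞) fun p => m⁻¹ * u p := contDiff_const.mul hu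
    have hvB : ∀ x ∈ cell A₀ M, |m⁻¹ * u x| ≤ 1 := by
      intro x hx
      rw [abs_mul, abs_of_pos (inv_pos.2 hm), inv_mul_le_iff₀ hm, mul_one]
      exact hum x hx
    have h3 := h2 _ hv hvB
    rw [cellSob_const_mul A₀ M n m⁻¹ hu] at h3
    have cv := DD_rpow_cont hv j (e := 2 * n / (j:ℝ)) (by positivity)
    have cR : Continuous fun p => R p ^ (2 * n) := hR.pow _
    calc ∫ p in cell A₀ M, (R p ^ (n - j) * DD j u p) ^ 2
        ≤ ∫ p in cell A₀ M, (m ^ 2 * (δ / C2) * DD j (fun p => m⁻¹ * u p) p ^ (2 * n / (j:ℝ)) +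
            C * m ^ 2 * R p ^ (2 * n)) := by
          apply setIntegral_mono_on (cell_intg _ _ _) (cell_intg _ _ _) (cell_meas _ _)
          · intro p hp
            have D0 := DD_nonneg j (fun p => m⁻¹ * u p) p
            have key := hy (DD j (fun p => m⁻¹ * u p) p ^ 2) (R p ^ (2 * (n - j)))
              (by positivity) (pow_nonneg (hR0 p) _)
            have e1 : (DD j (fun p => m⁻¹ * u p) p ^ 2) ^ ((n:ℝ) / j) =
                DD j (fun p => m⁻¹ * u p) p ^ (2 * n / (j:ℝ)) := by
              rw [← Real.rpow_natCast, ← Real.rpow_mul D0]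
              congr 1; push_cast; ring
            have e2 : (R p ^ (2 * (n - j))) ^ ((n:ℝ) / (n - j)) = R p ^ (2 * n) := by
              rw [← Real.rpow_natCast, ← Real.rpow_natCast, ← Real.rpow_mul (hR0 p)]
              congr 1; push_cast [Nat.cast_sub hjn.le]; field_simp
            rw [e1, e2] at key
            have e3 : DD j u p = m * DD j (fun p => m⁻¹ * u p) p := by
              rw [DD_const_mul _ _ hu, abs_of_pos (inv_pos.2 hm)]; field_simp
            rw [e3]
            have := mul_le_mul_of_nonneg_left key (sq_nonneg m)
            calc _ = m ^ 2 * (DD j (fun p => m⁻¹ * u p) p ^ 2 * R p ^ (2 * (n - j))) := by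
                  rw [mul_comm 2 (n - j), pow_mul]; ring
              _ ≤ _ := this
              _ = _ := by ring
          · exact ((hR.pow _).mul (DD_cont hu j)).pow 2
          · exact (continuous_const.mul cv).add (continuous_const.mul cR)
      _ = m ^ 2 * (δ / C2) * (∫ p in cell A₀ M, DD j (fun p => m⁻¹ * u p) p ^ (2 * n / (j:ℝ))) +
            C * m ^ 2 * ∫ p in cell A₀ M, R p ^ (2 * n) := by
          rw [integral_add ((cell_intg _ _ cv).const_mul _) ((cell_intg _ _ cR).const_mul _),
            integral_const_mul, integral_const_mul]
      _ ≤ m ^ 2 * (δ / C2) * (C2 * (m⁻¹ ^ 2 * cellSobSq A₀ M n u)) +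
            C * m ^ 2 * ∫ p in cell A₀ M, R p ^ (2 * n) := by
          have : 0 ≤ m ^ 2 * (δ / C2) := by positivity
          have := mul_le_mul_of_nonneg_left h3 this
          linarith
      _ = _ := by field_simp

/-- The standing hypotheses of the estimates. -/
structure Ctx (A₀ M K ε : ℝ) (z0 s0 u : ℝ × ℝ × ℝ → ℝ) (m : ℝ) : Prop where
  hz : ContDiff ℝ (⊤ : ℕ∞) z0
  hs : ContDiff ℝ (⊤ : ℕ∞) s0
  hu : ContDiff ℝ (⊤ : ℕ∞) u
  hm : 0 < m
  hum : ∀ x ∈ cell A₀ M, |u x| ≤ m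
  ha : ∀ x ∈ cell A₀ M, |ε * z0 x| ≤ K
  hb : ∀ x ∈ cell A₀ M, |ε * s0 x| ≤ K

/-- The local radius. -/
def RR (n : ℕ) (ε : ℝ) (z0 s0 : ℝ × ℝ × ℝ → ℝ) (p : ℝ × ℝ × ℝ) : ℝ :=
  r1 n (fun p => ε * z0 p) p + r1 n (fun p => ε * s0 p) p

/-- Sum of the squared norms of the coefficients. -/
def AB (A₀ M : ℝ) (n : ℕ) (ε : ℝ) (z0 s0 : ℝ × ℝ × ℝ → ℝ) : ℝ :=
  cellSobSq A₀ M n (fun p => ε * z0 p) + cellSobSq A₀ M n (fun p => ε * s0 p)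

lemma AB_nonneg (A₀ M n ε z0 s0) : 0 ≤ AB A₀ M n ε z0 s0 :=
  add_nonneg (cellSob_nonneg _ _ _ _) (cellSob_nonneg _ _ _ _)

lemma AB_mono (A₀ M ε z0 s0) {n k : ℕ} (h : n ≤ k) : AB A₀ M n ε z0 s0 ≤ AB A₀ M k ε z0 s0 :=
  add_le_add (cellSob_mono _ _ h _) (cellSob_mono _ _ h _)

lemma RR_nonneg (n ε z0 s0 p) : 0 ≤ RR n ε z0 s0 p :=
  add_nonneg (r1_nonneg _ _ _) (r1_nonneg _ _ _)

lemma Ctx.sa {A₀ M K ε : ℝ} {z0 s0 u : ℝ × ℝ × ℝ → ℝ} {m : ℝ} (h : Ctx A₀ M K ε z0 s0 u m) :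
    ContDiff ℝ (⊤ : ℕ∞) fun p => ε * z0 p := contDiff_const.mul h.hz

lemma Ctx.sb {A₀ M K ε : ℝ} {z0 s0 u : ℝ × ℝ × ℝ → ℝ} {m : ℝ} (h : Ctx A₀ M K ε z0 s0 u m) :
    ContDiff ℝ (⊤ : ℕ∞) fun p => ε * s0 p := contDiff_const.mul h.hs

lemma Ctx.contR {A₀ M K ε : ℝ} {z0 s0 u : ℝ × ℝ × ℝ → ℝ} {m : ℝ} (h : Ctx A₀ M K ε z0 s0 u m)
    (n : ℕ) : Continuous fun p => RR n ε z0 s0 p :=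
  (r1_cont h.sa n).add (r1_cont h.sb n)

lemma Ctx.ptHyp {A₀ M K ε : ℝ} {z0 s0 u : ℝ × ℝ × ℝ → ℝ} {m : ℝ} (h : Ctx A₀ M K ε z0 s0 u m)
    (n : ℕ) {p : ℝ × ℝ × ℝ} (hp : p ∈ cell A₀ M) :
    PtHyp n (max K 1) ε z0 s0 u p (RR n ε z0 s0 p) := by
  have aux : ∀ (c : ℝ × ℝ × ℝ → ℝ), |c p| ≤ K → r1 n c p ≤ RR n ε z0 s0 p →
      ∀ i ≤ n, DD i c p ≤ max K 1 * RR n ε z0 s0 p ^ i := by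
    intro c hc hr i hi
    rcases Nat.eq_zero_or_pos i with rfl | hi0
    · rw [pow_zero, mul_one]; exact hc.trans (le_max_left _ _)
    · refine (DD_le_r1 n c p i hi0 hi).trans ?_
      refine (pow_le_pow_left₀ (r1_nonneg _ _ _) hr i).trans ?_
      exact le_mul_of_one_le_left (pow_nonneg (RR_nonneg _ _ _ _ _) _) (le_max_right _ _)
  exact ⟨h.hz, h.hs, h.hu, RR_nonneg _ _ _ _ _,
    aux _ (h.ha p hp) (le_add_of_nonneg_right (r1_nonneg _ _ _)),
    aux _ (h.hb p hp) (le_add_of_nonneg_left (r1_nonneg _ _ _))⟩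

lemma RR_int {A₀ M : ℝ} (hAM : -A₀ < M) (n : ℕ) (hn : 1 ≤ n) {K : ℝ} (hK : 0 ≤ K) :
    ∃ C : ℝ, 0 < C ∧ ∀ ε z0 s0 u m, Ctx A₀ M K ε z0 s0 u m →
      ∫ p in cell A₀ M, RR n ε z0 s0 p ^ (2 * n) ≤ C * AB A₀ M n ε z0 s0 := by
  obtain ⟨C, hC, h⟩ := R1 hAM n hn hK
  refine ⟨2 ^ (2 * n - 1) * C, by positivity, fun ε z0 s0 u m c => ?_⟩
  have ca : Continuous fun p => r1 n (fun p => ε * z0 p) p ^ (2 * n) := (r1_cont c.sa n).pow _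
  have cb : Continuous fun p => r1 n (fun p => ε * s0 p) p ^ (2 * n) := (r1_cont c.sb n).pow _
  have cR : Continuous fun p => RR n ε z0 s0 p ^ (2 * n) := (c.contR n).pow _
  calc ∫ p in cell A₀ M, RR n ε z0 s0 p ^ (2 * n)
      ≤ ∫ p in cell A₀ M, 2 ^ (2 * n - 1) * (r1 n (fun p => ε * z0 p) p ^ (2 * n) +
          r1 n (fun p => ε * s0 p) p ^ (2 * n)) := by
        apply setIntegral_mono_on (cell_intg _ _ cR) (cell_intg _ _ (by fun_prop)) (cell_meas _ _)
        intro p _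
        exact add_pow_le (r1_nonneg _ _ _) (r1_nonneg _ _ _) _
    _ = 2 ^ (2 * n - 1) * ((∫ p in cell A₀ M, r1 n (fun p => ε * z0 p) p ^ (2 * n)) +
          ∫ p in cell A₀ M, r1 n (fun p => ε * s0 p) p ^ (2 * n)) := by
        rw [integral_const_mul, integral_add (cell_intg _ _ ca) (cell_intg _ _ cb)]
    _ ≤ 2 ^ (2 * n - 1) * (C * cellSobSq A₀ M n (fun p => ε * z0 p) +
          C * cellSobSq A₀ M n (fun p => ε * s0 p)) :=
        mul_le_mul_of_nonneg_left (add_le_add (h _ c.sa c.ha) (h _ c.sb c.hb)) (by positivity)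
    _ = _ := by unfold AB; ring

lemma Ctx.contV {A₀ M K ε : ℝ} {z0 s0 u : ℝ × ℝ × ℝ → ℝ} {m : ℝ} (h : Ctx A₀ M K ε z0 s0 u m)
    (n : ℕ) : Continuous fun p => VV (RR n ε z0 s0 p) u p n :=
  continuous_finsetSum _ fun j _ => ((h.contR n).pow _).mul (DD_cont h.hu j)

lemma VV_int {A₀ M : ℝ} (hAM : -A₀ < M) (n : ℕ) (hn : 1 ≤ n) {K : ℝ} (hK : 0 ≤ K) {δ : ℝ}
    (hδ : 0 < δ) :
    ∃ C : ℝ, 0 ≤ C ∧ ∀ ε z0 s0 u m, Ctx A₀ M K ε z0 s0 u m →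
      ∫ p in cell A₀ M, VV (RR n ε z0 s0 p) u p n ^ 2 ≤
        δ * cellSobSq A₀ M n u + C * m ^ 2 * AB A₀ M n ε z0 s0 := by
  obtain ⟨CR, hCR, hR⟩ := RR_int hAM n hn hK
  have hn0 : (0:ℝ) < n := by exact_mod_cast hn
  have H : ∀ j : ℕ, ∃ C : ℝ, 0 ≤ C ∧ (j < n → ∀ (u R : ℝ × ℝ × ℝ → ℝ) (m : ℝ),
      ContDiff ℝ (⊤ : ℕ∞) u → Continuous R →
      (∀ p, 0 ≤ R p) → 0 < m → (∀ x ∈ cell A₀ M, |u x| ≤ m) →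
      ∫ p in cell A₀ M, (R p ^ (n - j) * DD j u p) ^ 2 ≤
        δ / (n * n) * cellSobSq A₀ M n u + C * m ^ 2 * ∫ p in cell A₀ M, R p ^ (2 * n)) := by
    intro j
    by_cases h : j < n
    · obtain ⟨C, hC, h⟩ := WW hAM n j h (show 0 < δ / (n * n) by positivity)
      exact ⟨C, hC, fun _ => h⟩
    · exact ⟨1, zero_le_one, fun h' => absurd h' h⟩
  choose C hC H using H
  have hCs : 0 ≤ ∑ j ∈ Finset.range n, C j := Finset.sum_nonneg fun j _ => hC j
  refine ⟨n * (∑ j ∈ Finset.range n, C j) * CR, by positivity, fun ε z0 s0 u m c => ?_⟩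
  have ct : ∀ j : ℕ, Continuous fun p => (RR n ε z0 s0 p ^ (n - j) * DD j u p) ^ 2 :=
    fun j => (((c.contR n).pow _).mul (DD_cont c.hu j)).pow 2
  have cV : Continuous fun p => VV (RR n ε z0 s0 p) u p n ^ 2 := (c.contV n).pow 2
  calc ∫ p in cell A₀ M, VV (RR n ε z0 s0 p) u p n ^ 2
      ≤ ∫ p in cell A₀ M, n * ∑ j ∈ Finset.range n, (RR n ε z0 s0 p ^ (n - j) * DD j u p) ^ 2 := by
        apply setIntegral_mono_on (cell_intg _ _ cV) (cell_intg _ _ _) (cell_meas _ _)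
        · intro p _
          have := sq_sum_le_card_mul_sum_sq (s := Finset.range n)
            (f := fun j => RR n ε z0 s0 p ^ (n - j) * DD j u p)
          rwa [Finset.card_range] at this
        · exact continuous_const.mul (continuous_finsetSum _ fun j _ => ct j)
    _ = n * ∑ j ∈ Finset.range n,
          ∫ p in cell A₀ M, (RR n ε z0 s0 p ^ (n - j) * DD j u p) ^ 2 := by
        rw [integral_const_mul, integral_finsetSum]
        exact fun j _ => cell_intg _ _ (ct j)
    _ ≤ n * ∑ j ∈ Finset.range n, (δ / (n * n) * cellSobSq A₀ M n u +
          C j * (m ^ 2 * (CR * AB A₀ M n ε z0 s0))) := by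
        refine mul_le_mul_of_nonneg_left (Finset.sum_le_sum fun j hj => ?_) hn0.le
        have h1 := H j (Finset.mem_range.1 hj) u (fun p => RR n ε z0 s0 p) m c.hu (c.contR n)
          (RR_nonneg _ _ _ _) c.hm c.hum
        have h2 := mul_le_mul_of_nonneg_left (hR ε z0 s0 u m c)
          (mul_nonneg (hC j) (sq_nonneg m))
        linarith
    _ = _ := by
        rw [Finset.sum_add_distrib, Finset.sum_const, Finset.card_range, nsmul_eq_mul,
          ← Finset.sum_mul]
        field_simp

/-- Top order part of the Sobolev norm. -/
def TT (A₀ M : ℝ) (n : ℕ) (u : ℝ × ℝ × ℝ → ℝ) : ℝ :=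
  ∑ w : Fin n → Fin 3, ∫ p in cell A₀ M, (pdComp w u p) ^ 2

/-- Top order part of the field norm. -/
def FF (A₀ M ε : ℝ) (z0 s0 : ℝ × ℝ × ℝ → ℝ) (n : ℕ) (u : ℝ × ℝ × ℝ → ℝ) : ℝ :=
  ∑ w : Fin n → Fin 3, ∫ p in cell A₀ M, (fieldComp ε z0 s0 w u p) ^ 2

lemma FF_nonneg (A₀ M ε z0 s0 n u) : 0 ≤ FF A₀ M ε z0 s0 n u :=
  Finset.sum_nonneg fun _ _ => integral_nonneg fun _ => sq_nonneg _

lemma TT_le (A₀ M n u) : TT A₀ M n u ≤ cellSobSq A₀ M n u :=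
  Finset.single_le_sum (f := fun n => TT A₀ M n u)
    (fun _ _ => Finset.sum_nonneg fun _ _ => integral_nonneg fun _ => sq_nonneg _)
    (Finset.mem_range.2 n.lt_succ_self)

/-- Integral of the square of a sum over words. -/
lemma int_sum_sq (A₀ M : ℝ) (n : ℕ) (g : (Fin n → Fin 3) → ℝ × ℝ × ℝ → ℝ)
    (hg : ∀ w, Continuous (g w)) :
    ∫ p in cell A₀ M, (∑ w, |g w p|) ^ 2 ≤
      (Finset.univ : Finset (Fin n → Fin 3)).card * ∑ w, ∫ p in cell A₀ M, g w p ^ 2 := by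
  have c2 : ∀ w, Continuous fun p => g w p ^ 2 := fun w => (hg w).pow 2
  rw [← integral_finsetSum _ fun w _ => cell_intg _ _ (c2 w), ← integral_const_mul]
  apply setIntegral_mono_on (cell_intg _ _ _) (cell_intg _ _ _) (cell_meas _ _)
  · intro p _
    have := sq_sum_le_card_mul_sum_sq (s := Finset.univ) (f := fun w => |g w p|)
    simpa only [sq_abs] using this
  · exact (continuous_finsetSum _ fun w _ => (hg w).abs).pow 2
  · exact continuous_const.mul (continuous_finsetSum _ fun w _ => c2 w)

lemma int_add_sq (A₀ M : ℝ) {f g : ℝ × ℝ × ℝ → ℝ} (hf : Continuous f) (hg : Continuous g) :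
    ∫ p in cell A₀ M, (f p + g p) ^ 2 ≤
      2 * (∫ p in cell A₀ M, f p ^ 2) + 2 * ∫ p in cell A₀ M, g p ^ 2 := by
  have cf : Continuous fun p => f p ^ 2 := hf.pow 2
  have cg : Continuous fun p => g p ^ 2 := hg.pow 2
  rw [← integral_const_mul, ← integral_const_mul,
    ← integral_add ((cell_intg _ _ cf).const_mul _) ((cell_intg _ _ cg).const_mul _)]
  apply setIntegral_mono_on (cell_intg _ _ (by fun_prop)) (cell_intg _ _ (by fun_prop))
    (cell_meas _ _)
  intro p _
  have := sq_nonneg (f p - g p)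
  nlinarith

lemma DD_int {A₀ M : ℝ} (n : ℕ) : ∃ C : ℝ, 0 ≤ C ∧ ∀ u : ℝ × ℝ × ℝ → ℝ,
    ContDiff ℝ (⊤ : ℕ∞) u → ∫ p in cell A₀ M, DD n u p ^ 2 ≤ C * cellSobSq A₀ M n u := by
  refine ⟨(Finset.univ : Finset (Fin n → Fin 3)).card, by positivity, fun u hu => ?_⟩
  simp only [DD_eq]
  exact (int_sum_sq A₀ M n (fun w => pdComp w u) fun w => (pdComp_smooth hu w).continuous).trans
    (mul_le_mul_of_nonneg_left (TT_le A₀ M n u) (by positivity))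

lemma TT_le_DD {A₀ M : ℝ} (n : ℕ) {u : ℝ × ℝ × ℝ → ℝ} (hu : ContDiff ℝ (⊤ : ℕ∞) u) :
    TT A₀ M n u ≤ ∫ p in cell A₀ M, DD n u p ^ 2 := by
  have c2 : ∀ w : Fin n → Fin 3, Continuous fun p => pdComp w u p ^ 2 :=
    fun w => (pdComp_smooth hu w).continuous.pow 2
  have cD : Continuous fun p => DD n u p ^ 2 := (DD_cont hu n).pow 2
  unfold TT
  rw [← integral_finsetSum _ fun w _ => cell_intg _ _ (c2 w)]
  apply setIntegral_mono_on (cell_intg _ _ (continuous_finsetSum _ fun w _ => c2 w))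
    (cell_intg _ _ cD) (cell_meas _ _)
  intro p _
  rw [DD_eq]
  rw [sq (∑ w : Fin n → Fin 3, |pdComp w u p|), Finset.sum_mul]
  refine Finset.sum_le_sum fun w _ => ?_
  rw [← sq_abs, sq]
  exact mul_le_mul_of_nonneg_left (Finset.single_le_sum (f := fun w : Fin n → Fin 3 =>
    |pdComp w u p|) (fun _ _ => abs_nonneg _) (Finset.mem_univ w)) (abs_nonneg _)

lemma int_const_sq (A₀ M C : ℝ) (f : ℝ × ℝ × ℝ → ℝ) :
    ∫ p in cell A₀ M, (C * f p) ^ 2 = C ^ 2 * ∫ p in cell A₀ M, f p ^ 2 := by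
  rw [← integral_const_mul]; simp only [mul_pow]

lemma dir1 {A₀ M : ℝ} (hAM : -A₀ < M) (n : ℕ) {K : ℝ} (hK : 0 ≤ K) :
    ∃ C : ℝ, 0 ≤ C ∧ ∀ ε z0 s0 u m, Ctx A₀ M K ε z0 s0 u m →
      FF A₀ M ε z0 s0 n u ≤ C * (cellSobSq A₀ M n u + m ^ 2 * AB A₀ M n ε z0 s0) := by
  rcases Nat.eq_zero_or_pos n with rfl | hn
  · refine ⟨1, zero_le_one, fun ε z0 s0 u m c => ?_⟩
    have h1 : FF A₀ M ε z0 s0 0 u ≤ cellSobSq A₀ M 0 u := TT_le A₀ M 0 u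
    have := mul_nonneg (sq_nonneg m) (AB_nonneg A₀ M 0 ε z0 s0)
    linarith
  obtain ⟨CA, hCA, hA⟩ := claimA n (K := max K 1) (hK.trans (le_max_left _ _)) n
  obtain ⟨CV, hCV, hV⟩ := VV_int hAM n hn hK one_pos
  obtain ⟨CD, hCD, hD⟩ := DD_int (A₀ := A₀) (M := M) n
  obtain ⟨c, hc⟩ : ∃ c : ℝ, c = ((Finset.univ : Finset (Fin n → Fin 3)).card : ℝ) := ⟨_, rfl⟩
  have hc0 : 0 ≤ c := by rw [hc]; positivity
  refine ⟨c * (CA ^ 2 * (2 * (1 + CV) + 2 * CD)), by positivity, fun ε z0 s0 u m x => ?_⟩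
  have S0 := cellSob_nonneg A₀ M n u
  have AB0 := mul_nonneg (sq_nonneg m) (AB_nonneg A₀ M n ε z0 s0)
  have each : ∀ w : Fin n → Fin 3, ∫ p in cell A₀ M, (fieldComp ε z0 s0 w u p) ^ 2 ≤
      CA ^ 2 * (2 * (1 + CV) + 2 * CD) * (cellSobSq A₀ M n u + m ^ 2 * AB A₀ M n ε z0 s0) := by
    intro w
    calc ∫ p in cell A₀ M, (fieldComp ε z0 s0 w u p) ^ 2
        ≤ ∫ p in cell A₀ M, (CA * (VV (RR n ε z0 s0 p) u p n + DD n u p)) ^ 2 := by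
          apply setIntegral_mono_on (cell_intg _ _ _) (cell_intg _ _ _) (cell_meas _ _)
          · intro p hp
            have h1 := hA 0 (by omega) ε z0 s0 u p _ (x.ptHyp n hp) w
            have e : UU (RR n ε z0 s0 p) u p (0 + n) =
                VV (RR n ε z0 s0 p) u p n + DD n u p := by
              rw [zero_add]; unfold UU VV
              rw [Finset.sum_range_succ, Nat.sub_self, pow_zero, one_mul]
            rw [e] at h1
            rw [← sq_abs (fieldComp ε z0 s0 w u p)]
            exact pow_le_pow_left₀ (abs_nonneg _) h1 2
          · exact (fieldComp_smooth x.hz x.hs x.hu w).continuous.pow 2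
          · exact (continuous_const.mul ((x.contV n).add (DD_cont x.hu n))).pow 2
      _ = CA ^ 2 * ∫ p in cell A₀ M, (VV (RR n ε z0 s0 p) u p n + DD n u p) ^ 2 :=
          int_const_sq _ _ _ _
      _ ≤ CA ^ 2 * (2 * (1 * cellSobSq A₀ M n u + CV * m ^ 2 * AB A₀ M n ε z0 s0) +
          2 * (CD * cellSobSq A₀ M n u)) := by
          refine mul_le_mul_of_nonneg_left ?_ (sq_nonneg _)
          refine (int_add_sq A₀ M (x.contV n) (DD_cont x.hu n)).trans ?_
          have := hV ε z0 s0 u m x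
          have := hD u x.hu
          linarith
      _ ≤ _ := by
          rw [mul_assoc (CA ^ 2)]
          refine mul_le_mul_of_nonneg_left ?_ (sq_nonneg _)
          have t1 := mul_nonneg hCV S0
          have t2 := mul_nonneg hCD AB0
          nlinarith
  calc FF A₀ M ε z0 s0 n u ≤ ∑ w : Fin n → Fin 3, CA ^ 2 * (2 * (1 + CV) + 2 * CD) *
        (cellSobSq A₀ M n u + m ^ 2 * AB A₀ M n ε z0 s0) := Finset.sum_le_sum fun w _ => each w
    _ = _ := by rw [Finset.sum_const, nsmul_eq_mul, ← hc]; ring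

lemma cellSob_succ (A₀ M n u) :
    cellSobSq A₀ M (n + 1) u = cellSobSq A₀ M n u + TT A₀ M (n + 1) u :=
  Finset.sum_range_succ _ _

lemma dir2 {A₀ M : ℝ} (hAM : -A₀ < M) (n : ℕ) {K : ℝ} (hK : 0 ≤ K) :
    ∃ C : ℝ, 0 ≤ C ∧ ∀ ε z0 s0 u m, Ctx A₀ M K ε z0 s0 u m →
      cellSobSq A₀ M (n + 1) u ≤ C * (cellSobSq A₀ M n u + FF A₀ M ε z0 s0 (n + 1) u +
        m ^ 2 * AB A₀ M (n + 1) ε z0 s0) := by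
  obtain ⟨CB, hCB, hB⟩ := claimB (n + 1) (K := max K 1) (hK.trans (le_max_left _ _)) (n + 1)
  obtain ⟨δ, hδ⟩ : ∃ δ : ℝ, δ = 1 / (4 * (CB ^ 2 + 1)) := ⟨_, rfl⟩
  have hδ0 : 0 < δ := by rw [hδ]; positivity
  have hδ1 : CB ^ 2 * (2 * δ) ≤ 1 / 2 := by
    rw [hδ]; field_simp; nlinarith [sq_nonneg CB]
  obtain ⟨CV, hCV, hV⟩ := VV_int hAM (n + 1) (by omega) hK hδ0
  obtain ⟨c, hc⟩ : ∃ c : ℝ, c = ((Finset.univ : Finset (Fin (n + 1) → Fin 3)).card : ℝ) :=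
    ⟨_, rfl⟩
  have hc0 : 0 ≤ c := by rw [hc]; positivity
  refine ⟨2 * (1 + CB ^ 2 * (2 * c + 2 * CV)), by positivity, fun ε z0 s0 u m x => ?_⟩
  have S0 := cellSob_nonneg A₀ M n u
  have S1 := cellSob_nonneg A₀ M (n + 1) u
  have F0 := FF_nonneg A₀ M ε z0 s0 (n + 1) u
  have AB0 := mul_nonneg (sq_nonneg m) (AB_nonneg A₀ M (n + 1) ε z0 s0)
  have cf : ∀ w : Fin (n + 1) → Fin 3, Continuous (fieldComp ε z0 s0 w u) :=
    fun w => (fieldComp_smooth x.hz x.hs x.hu w).continuous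
  have cG : Continuous fun p => GG ε z0 s0 u p (n + 1) :=
    continuous_finsetSum _ fun w _ => (cf w).abs
  have key : TT A₀ M (n + 1) u ≤ CB ^ 2 * (2 * (c * FF A₀ M ε z0 s0 (n + 1) u) +
      2 * (δ * cellSobSq A₀ M (n + 1) u + CV * m ^ 2 * AB A₀ M (n + 1) ε z0 s0)) := by
    calc TT A₀ M (n + 1) u ≤ ∫ p in cell A₀ M, DD (n + 1) u p ^ 2 := TT_le_DD _ x.hu
      _ ≤ ∫ p in cell A₀ M, (CB * (GG ε z0 s0 u p (n + 1) +
            VV (RR (n + 1) ε z0 s0 p) u p (n + 1))) ^ 2 := by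
          apply setIntegral_mono_on (cell_intg _ _ _) (cell_intg _ _ _) (cell_meas _ _)
          · intro p hp
            have h1 := hB 0 (by omega) ε z0 s0 u p _ (x.ptHyp (n + 1) hp) Fin.elim0
            exact pow_le_pow_left₀ (DD_nonneg _ _ _) h1 2
          · exact (DD_cont x.hu _).pow 2
          · exact (continuous_const.mul (cG.add (x.contV (n + 1)))).pow 2
      _ = CB ^ 2 * ∫ p in cell A₀ M, (GG ε z0 s0 u p (n + 1) +
            VV (RR (n + 1) ε z0 s0 p) u p (n + 1)) ^ 2 := int_const_sq _ _ _ _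
      _ ≤ _ := by
          refine mul_le_mul_of_nonneg_left ?_ (sq_nonneg _)
          refine (int_add_sq A₀ M cG (x.contV (n + 1))).trans ?_
          have t1 := hV ε z0 s0 u m x
          have t2 := int_sum_sq A₀ M (n + 1) (fun w => fieldComp ε z0 s0 w u) cf
          rw [← hc] at t2
          exact add_le_add (mul_le_mul_of_nonneg_left t2 zero_le_two)
            (mul_le_mul_of_nonneg_left t1 zero_le_two)
  have e := cellSob_succ A₀ M n u
  have t1 := mul_le_mul_of_nonneg_right hδ1 S1
  have q1 : 0 ≤ CB ^ 2 * c * cellSobSq A₀ M n u := by positivity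
  have q2 : 0 ≤ CB ^ 2 * CV * cellSobSq A₀ M n u := by positivity
  have q3 : 0 ≤ CB ^ 2 * CV * FF A₀ M ε z0 s0 (n + 1) u := by positivity
  have q4 : 0 ≤ CB ^ 2 * c * (m ^ 2 * AB A₀ M (n + 1) ε z0 s0) := by positivity
  nlinarith

lemma dir1s {A₀ M : ℝ} (hAM : -A₀ < M) (s : ℕ) {K : ℝ} (hK : 0 ≤ K) :
    ∃ C : ℝ, 0 ≤ C ∧ ∀ ε z0 s0 u m, Ctx A₀ M K ε z0 s0 u m →
      cellFieldSq A₀ M ε z0 s0 s u ≤ C * (cellSobSq A₀ M s u + m ^ 2 * AB A₀ M s ε z0 s0) := by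
  choose C hC h using fun n => dir1 hAM n hK
  refine ⟨∑ n ∈ Finset.range (s + 1), C n, Finset.sum_nonneg fun n _ => hC n,
    fun ε z0 s0 u m x => ?_⟩
  rw [Finset.sum_mul]
  refine Finset.sum_le_sum fun n hn => (h n ε z0 s0 u m x).trans ?_
  have hns : n ≤ s := by have := Finset.mem_range.1 hn; omega
  refine mul_le_mul_of_nonneg_left (add_le_add (cellSob_mono _ _ hns _) ?_) (hC n)
  exact mul_le_mul_of_nonneg_left (AB_mono _ _ _ _ _ hns) (sq_nonneg _)

lemma dir2s {A₀ M : ℝ} (hAM : -A₀ < M) {K : ℝ} (hK : 0 ≤ K) (s : ℕ) :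
    ∃ C : ℝ, 0 ≤ C ∧ ∀ ε z0 s0 u m, Ctx A₀ M K ε z0 s0 u m →
      cellSobSq A₀ M s u ≤ C * (cellFieldSq A₀ M ε z0 s0 s u + m ^ 2 * AB A₀ M s ε z0 s0) := by
  induction s with
  | zero =>
    refine ⟨1, zero_le_one, fun ε z0 s0 u m x => ?_⟩
    have := mul_nonneg (sq_nonneg m) (AB_nonneg A₀ M 0 ε z0 s0)
    have e : cellSobSq A₀ M 0 u = cellFieldSq A₀ M ε z0 s0 0 u := by
      unfold cellSobSq cellFieldSq
      simp only [zero_add, Finset.sum_range_one]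
      rfl
    linarith
  | succ n ih =>
    obtain ⟨C, hC, ih⟩ := ih
    obtain ⟨C2, hC2, h2⟩ := dir2 hAM n hK
    refine ⟨C2 * (C + 1), by positivity, fun ε z0 s0 u m x => ?_⟩
    have F0 := FF_nonneg A₀ M ε z0 s0 (n + 1) u
    have e : cellFieldSq A₀ M ε z0 s0 (n + 1) u =
        cellFieldSq A₀ M ε z0 s0 n u + FF A₀ M ε z0 s0 (n + 1) u := Finset.sum_range_succ _ _
    have G0 : 0 ≤ cellFieldSq A₀ M ε z0 s0 n u :=
      Finset.sum_nonneg fun i _ => FF_nonneg A₀ M ε z0 s0 i u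
    have t := mul_le_mul_of_nonneg_left (AB_mono A₀ M ε z0 s0 n.le_succ) (sq_nonneg m)
    have i1 := ih ε z0 s0 u m x
    have i2 : C * (cellFieldSq A₀ M ε z0 s0 n u + m ^ 2 * AB A₀ M n ε z0 s0) ≤
        C * (cellFieldSq A₀ M ε z0 s0 (n + 1) u + m ^ 2 * AB A₀ M (n + 1) ε z0 s0) :=
      mul_le_mul_of_nonneg_left (by rw [e]; linarith) hC
    refine (h2 ε z0 s0 u m x).trans ?_
    rw [mul_assoc]
    refine mul_le_mul_of_nonneg_left ?_ hC2
    rw [e] at i2 ⊢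
    linarith

/-- **Proposition IV.3.1** (equivalence of the standard Sobolev norm and the field norm):
with tame dependence on `‖ε z₀‖_s`, `‖ε s₀‖_s`. -/
theorem field_norm_equivalence (A₀ M : ℝ) (hAM : -A₀ < M) (s : ℕ) (K : ℝ) (hK : 0 < K) :
    ∃ C : ℝ, 0 < C ∧
      ∀ ε : ℝ, 0 < ε → ε ≤ 1 →
        ∀ z0 s0 u : ℝ × ℝ × ℝ → ℝ,
          ContDiff ℝ (⊤ : ℕ∞) z0 → ContDiff ℝ (⊤ : ℕ∞) s0 → ContDiff ℝ (⊤ : ℕ∞) u →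
          PerY z0 → PerY s0 → PerY u →
          C1Bound A₀ M K z0 → C1Bound A₀ M K s0 →
          cellFieldSq A₀ M ε z0 s0 s u ≤
            C * (cellSobSq A₀ M s u + (supCell A₀ M u) ^ 2 *
              (1 + cellSobSq A₀ M s (fun p => ε * z0 p) +
                cellSobSq A₀ M s (fun p => ε * s0 p))) ∧
          cellSobSq A₀ M s u ≤
            C * (cellFieldSq A₀ M ε z0 s0 s u + (supCell A₀ M u) ^ 2 *
              (1 + cellSobSq A₀ M s (fun p => ε * z0 p) +
                cellSobSq A₀ M s (fun p => ε * s0 p))) := by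
  obtain ⟨C1, hC1, h1⟩ := dir1s hAM s hK.le
  obtain ⟨C2, hC2, h2⟩ := dir2s hAM hK.le s
  refine ⟨C1 + C2 + 1, by positivity, fun ε hε hε1 z0 s0 u hz hs hu _ _ _ hz1 hs1 => ?_⟩
  have small : ∀ c : ℝ × ℝ × ℝ → ℝ, C1Bound A₀ M K c → ∀ x ∈ cell A₀ M, |ε * c x| ≤ K := by
    intro c hc x hx
    have h := (hc x ⟨hx.1, hx.2.2⟩).1
    rw [abs_mul, abs_of_pos hε]
    calc ε * |c x| ≤ 1 * K := mul_le_mul hε1 h (abs_nonneg _) zero_le_one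
      _ = K := one_mul K
  have hsup : ∀ x ∈ cell A₀ M, |u x| ≤ supCell A₀ M u := fun x hx =>
    le_csSup ((cell_compact A₀ M).bddAbove_image hu.continuous.abs.continuousOn) ⟨x, hx, rfl⟩
  have hsup0 : 0 ≤ supCell A₀ M u := by
    apply Real.sSup_nonneg
    rintro _ ⟨x, _, rfl⟩
    exact abs_nonneg _
  have ctx : ∀ m, supCell A₀ M u < m → Ctx A₀ M K ε z0 s0 u m := fun m hm =>
    ⟨hz, hs, hu, hsup0.trans_lt hm, fun x hx => (hsup x hx).trans hm.le, small _ hz1, small _ hs1⟩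
  have lim : ∀ X Y C : ℝ, (∀ m, supCell A₀ M u < m →
      X ≤ C * (Y + m ^ 2 * AB A₀ M s ε z0 s0)) →
      X ≤ C * (Y + supCell A₀ M u ^ 2 * AB A₀ M s ε z0 s0) := by
    intro X Y C h
    have hc : Continuous fun m : ℝ => C * (Y + m ^ 2 * AB A₀ M s ε z0 s0) := by fun_prop
    have ht := (hc.tendsto (supCell A₀ M u)).mono_left
      (nhdsWithin_le_nhds (s := Set.Ioi (supCell A₀ M u)))
    exact ge_of_tendsto ht (Filter.eventually_of_mem self_mem_nhdsWithin fun m hm => h m hm)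
  have l1 := lim _ _ _ fun m hm => h1 ε z0 s0 u m (ctx m hm)
  have l2 := lim _ _ _ fun m hm => h2 ε z0 s0 u m (ctx m hm)
  have fin : ∀ X Y C : ℝ, 0 ≤ Y → 0 ≤ C → C ≤ C1 + C2 + 1 →
      X ≤ C * (Y + supCell A₀ M u ^ 2 * AB A₀ M s ε z0 s0) →
      X ≤ (C1 + C2 + 1) * (Y + (supCell A₀ M u) ^ 2 *
        (1 + cellSobSq A₀ M s (fun p => ε * z0 p) + cellSobSq A₀ M s (fun p => ε * s0 p))) := by
    intro X Y C hY hC hle h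
    have a0 := AB_nonneg A₀ M s ε z0 s0
    have e : 1 + cellSobSq A₀ M s (fun p => ε * z0 p) + cellSobSq A₀ M s (fun p => ε * s0 p) =
        1 + AB A₀ M s ε z0 s0 := by unfold AB; ring
    rw [e]
    refine h.trans (mul_le_mul hle ?_ (by positivity) (by positivity))
    have := sq_nonneg (supCell A₀ M u)
    linarith
  exact ⟨fin _ _ C1 (cellSob_nonneg _ _ _ _) hC1 (by linarith) l1,
    fin _ _ C2 (Finset.sum_nonneg fun i _ => FF_nonneg A₀ M ε z0 s0 i u) hC2 (by linarith) l2⟩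

end
end

section
/- There exist functions h₁, h₂, h₃, h₀, smooth in (ε, α, R, τ, F̄) ∈ [0,1] × ℝ × (0,∞) × (0,∞) × ℝ and 2π-periodic in α, such that for every ε ∈ (0,1] and every C^∞ function F(σ,α,τ) on ℝ × ℝ × (0,∞), 2π-periodic in α, the function w(x,t) = (ε/r^{1/2})·F(r − t, α(x), ε·t^{1/2}) satisfies, at every point with r = |x| > 0 and t > 0: (r/ε²)·P(w) = −F·F_{σσ} − ((R^{1/2} − ε²F)/τ)·(F_{στ} − (ε²/(4τ))·F_{ττ}) − ε²·R^{−3/2}·F_{αα} − (F_σ − (ε²/(2τ))·F_τ)² + ε²·(h₁·F_σ + h₂·F_α + h₃·F_τ) + ε²·h₀, where all derivatives of F and the arguments of h₁, h₂, h₃, h₀ are evaluated at σ = r − t, α = α(x), τ = ε·t^{1/2}, F̄ = F(σ,α,τ), and R = τ² + ε²σ (which equals ε²r > 0 at these arguments). -/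
noncomputable section

/-- The polar angle of `x ∈ ℝ²`. -/
def polarAngle (x : ℝ × ℝ) : ℝ := Complex.arg (x.1 + x.2 * Complex.I)

/-- The conservative wave operator `P(w) = ∂_t²w − Δw − ½ ∂_t²(w²)`,
with coordinates `(x₁, x₂, t)`. -/
def Pop (w : ℝ × ℝ × ℝ → ℝ) (p : ℝ × ℝ × ℝ) : ℝ :=
  pd 2 (pd 2 w) p - (pd 0 (pd 0 w) p + pd 1 (pd 1 w) p) -
    (1 / 2) * pd 2 (pd 2 fun q => w q ^ 2) p

/-- The normalized operator `P̃(F)` of Lemma II.2 (coordinates `(σ, α, τ)`,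
`R = τ² + ε²σ`, the `h`'s evaluated at `(ε, α, R, τ, F)`). -/
def Ptilde (h1 h2 h3 h0 : ℝ × ℝ × ℝ × ℝ × ℝ → ℝ) (ε : ℝ) (F : ℝ × ℝ × ℝ → ℝ)
    (p : ℝ × ℝ × ℝ) : ℝ :=
  -(F p * pd 0 (pd 0 F) p) -
    ((Real.sqrt (p.2.2 ^ 2 + ε ^ 2 * p.1) - ε ^ 2 * F p) / p.2.2) *
      (pd 2 (pd 0 F) p - (ε ^ 2 / (4 * p.2.2)) * pd 2 (pd 2 F) p) -
    ε ^ 2 * (p.2.2 ^ 2 + ε ^ 2 * p.1) ^ (-(3 : ℝ) / 2) * pd 1 (pd 1 F) p -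
    (pd 0 F p - (ε ^ 2 / (2 * p.2.2)) * pd 2 F p) ^ 2 +
    ε ^ 2 * (h1 (ε, p.2.1, p.2.2 ^ 2 + ε ^ 2 * p.1, p.2.2, F p) * pd 0 F p +
      h2 (ε, p.2.1, p.2.2 ^ 2 + ε ^ 2 * p.1, p.2.2, F p) * pd 1 F p +
      h3 (ε, p.2.1, p.2.2 ^ 2 + ε ^ 2 * p.1, p.2.2, F p) * pd 2 F p) +
    ε ^ 2 * h0 (ε, p.2.1, p.2.2 ^ 2 + ε ^ 2 * p.1, p.2.2, F p)

/-- Smoothness of the coefficients `h` on `[0,1] × ℝ × (0,∞) × (0,∞) × ℝ`. -/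
def SmoothCoeff (h : ℝ × ℝ × ℝ × ℝ × ℝ → ℝ) : Prop :=
  ContDiffOn ℝ (⊤ : ℕ∞) h
    {q : ℝ × ℝ × ℝ × ℝ × ℝ | q.1 ∈ Set.Icc 0 1 ∧ 0 < q.2.2.1 ∧ 0 < q.2.2.2.1} ∧
  ∀ e a R τ f : ℝ, h (e, a + 2 * Real.pi, R, τ, f) = h (e, a, R, τ, f)

/-- Smoothness on the half space. -/
def Sm (F : ℝ × ℝ × ℝ → ℝ) : Prop := ContDiffOn ℝ (⊤ : ℕ∞) F {q : ℝ × ℝ × ℝ | 0 < q.2.2}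

lemma isOpen_half : IsOpen {q : ℝ × ℝ × ℝ | 0 < q.2.2} :=
  isOpen_lt continuous_const (by fun_prop)

lemma Sm.contDiffAt {F : ℝ × ℝ × ℝ → ℝ} (h : Sm F) {p : ℝ × ℝ × ℝ} (hp : 0 < p.2.2) :
    ContDiffAt ℝ (⊤ : ℕ∞) F p :=
  ContDiffOn.contDiffAt h (isOpen_half.mem_nhds hp)

lemma Sm.diffAt {F : ℝ × ℝ × ℝ → ℝ} (h : Sm F) {p : ℝ × ℝ × ℝ} (hp : 0 < p.2.2) :
    DifferentiableAt ℝ F p :=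
  (h.contDiffAt hp).differentiableAt (by simp)

/-- Basis vectors. -/
def ev (i : Fin 3) : ℝ × ℝ × ℝ :=
  if i = 0 then (1, 0, 0) else if i = 1 then (0, 1, 0) else (0, 0, 1)

lemma pd_eq_s15 {F : ℝ × ℝ × ℝ → ℝ} {p : ℝ × ℝ × ℝ} (hd : DifferentiableAt ℝ F p) (i : Fin 3) :
    pd i F p = fderiv ℝ F p (ev i) := by
  obtain ⟨a, b, c⟩ := p
  fin_cases i
  · have h1 : HasDerivAt (fun s : ℝ => ((s, b, c) : ℝ × ℝ × ℝ)) (1, 0, 0) a :=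
      (hasDerivAt_id a).prodMk ((hasDerivAt_const a b).prodMk (hasDerivAt_const a c))
    exact (HasFDerivAt.comp_hasDerivAt a (hd.hasFDerivAt) h1).deriv
  · have h1 : HasDerivAt (fun s : ℝ => ((a, s, c) : ℝ × ℝ × ℝ)) (0, 1, 0) b :=
      (hasDerivAt_const b a).prodMk ((hasDerivAt_id b).prodMk (hasDerivAt_const b c))
    exact (HasFDerivAt.comp_hasDerivAt b (hd.hasFDerivAt) h1).deriv
  · have h1 : HasDerivAt (fun s : ℝ => ((a, b, s) : ℝ × ℝ × ℝ)) (0, 0, 1) c :=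
      (hasDerivAt_const c a).prodMk ((hasDerivAt_const c b).prodMk (hasDerivAt_id c))
    exact (HasFDerivAt.comp_hasDerivAt c (hd.hasFDerivAt) h1).deriv

lemma Sm.pd {F : ℝ × ℝ × ℝ → ℝ} (h : Sm F) (i : Fin 3) : Sm (pd i F) := by
  have h1 : ContDiffOn ℝ (⊤ : ℕ∞) (fderiv ℝ F) {q : ℝ × ℝ × ℝ | 0 < q.2.2} :=
    ContDiffOn.fderiv_of_isOpen h isOpen_half (by simp)
  have h2 : ContDiffOn ℝ (⊤ : ℕ∞) (fun p => fderiv ℝ F p (ev i)) {q : ℝ × ℝ × ℝ | 0 < q.2.2} :=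
    h1.clm_apply contDiffOn_const
  exact h2.congr fun p hp => pd_eq_s15 (h.diffAt hp) i

lemma Sm.pd_comm {F : ℝ × ℝ × ℝ → ℝ} (h : Sm F) (i j : Fin 3) {p : ℝ × ℝ × ℝ}
    (hp : 0 < p.2.2) : _root_.pd i (_root_.pd j F) p = _root_.pd j (_root_.pd i F) p := by
  have hdd : DifferentiableAt ℝ (fderiv ℝ F) p :=
    ((ContDiffOn.fderiv_of_isOpen (m := (⊤ : ℕ∞)) h isOpen_half (by simp)).contDiffAt
      (isOpen_half.mem_nhds hp)).differentiableAt (by simp)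
  have key : ∀ i j, _root_.pd i (_root_.pd j F) p = fderiv ℝ (fderiv ℝ F) p (ev i) (ev j) := by
    intro i j
    rw [pd_eq_s15 ((h.pd j).diffAt hp)]
    have he : _root_.pd j F =ᶠ[nhds p] fun q => fderiv ℝ F q (ev j) := by
      filter_upwards [isOpen_half.mem_nhds hp] with q hq
      exact pd_eq_s15 (h.diffAt hq) j
    rw [he.fderiv_eq]
    have := (hdd.hasFDerivAt.clm_apply (hasFDerivAt_const (ev j) p)).fderiv
    rw [this]
    simp
  rw [key, key]
  have hs : IsSymmSndFDerivAt ℝ F p := (h.contDiffAt hp).isSymmSndFDerivAt (by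
    rw [minSmoothness_of_isRCLikeNormedField]
    exact WithTop.coe_le_coe.2 (le_top : (2 : ℕ∞) ≤ ⊤))
  exact hs.eq _ _

lemma Sm.chain {F : ℝ × ℝ × ℝ → ℝ} (h : Sm F) {a b c : ℝ → ℝ} {a' b' c' s : ℝ}
    (ha : HasDerivAt a a' s) (hb : HasDerivAt b b' s) (hc : HasDerivAt c c' s) (hp : 0 < c s) :
    HasDerivAt (fun u => F (a u, b u, c u))
      (_root_.pd 0 F (a s, b s, c s) * a' + _root_.pd 1 F (a s, b s, c s) * b'
        + _root_.pd 2 F (a s, b s, c s) * c') s := by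
  have hd : DifferentiableAt ℝ F (a s, b s, c s) := h.diffAt hp
  have h1 := HasFDerivAt.comp_hasDerivAt s hd.hasFDerivAt (ha.prodMk (hb.prodMk hc))
  rw [pd_eq_s15 hd, pd_eq_s15 hd, pd_eq_s15 hd]
  refine h1.congr_deriv ?_
  have : ((a', b', c') : ℝ × ℝ × ℝ) = a' • ev 0 + b' • ev 1 + c' • ev 2 := by
    simp [ev]
  rw [this, map_add, map_add, map_smul, map_smul, map_smul]
  simp only [smul_eq_mul]; ring

lemma slice_x {F : ℝ × ℝ × ℝ → ℝ} (h : Sm F) {ρ θ : ℝ → ℝ} {κ ε t T s0 : ℝ} (hT : 0 < T)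
    (hev : ∀ᶠ s in nhds s0, 0 < ρ s ∧ HasDerivAt ρ (s / ρ s) s ∧
      HasDerivAt θ (κ / ρ s ^ 2) s) :
    deriv (fun s => deriv (fun u => ε / √(ρ u) * F (ρ u - t, θ u, T)) s) s0 =
      ε / √(ρ s0) * (s0 ^ 2 / ρ s0 ^ 2 * pd 0 (pd 0 F) (ρ s0 - t, θ s0, T)
        + 2 * s0 * κ / ρ s0 ^ 3 * pd 0 (pd 1 F) (ρ s0 - t, θ s0, T)
        + κ ^ 2 / ρ s0 ^ 4 * pd 1 (pd 1 F) (ρ s0 - t, θ s0, T)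
        + (1 / ρ s0 - 2 * s0 ^ 2 / ρ s0 ^ 3) * pd 0 F (ρ s0 - t, θ s0, T)
        + (- 3 * s0 * κ / ρ s0 ^ 4) * pd 1 F (ρ s0 - t, θ s0, T)
        + (5 * s0 ^ 2 / (4 * ρ s0 ^ 4) - 1 / (2 * ρ s0 ^ 2)) * F (ρ s0 - t, θ s0, T)) := by
  have hk : ∀ s, 0 < ρ s → HasDerivAt ρ (s / ρ s) s →
      HasDerivAt (fun u => ε / √(ρ u)) (ε / √(ρ s) * (- s / (2 * ρ s ^ 2))) s := by
    intro s h1 h2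
    have hm : 0 < √(ρ s) := Real.sqrt_pos.2 h1
    have h3 := (hasDerivAt_const s ε).div (h2.sqrt h1.ne') hm.ne'
    refine h3.congr_deriv ?_
    have hq : ρ s = √(ρ s) ^ 2 := (Real.sq_sqrt h1.le).symm
    generalize √(ρ s) = m at *
    rw [hq]
    field_simp
    ring
  have hG : ∀ G, Sm G → ∀ s, 0 < ρ s → HasDerivAt ρ (s / ρ s) s →
      HasDerivAt θ (κ / ρ s ^ 2) s → HasDerivAt (fun u => G (ρ u - t, θ u, T))
        (pd 0 G (ρ s - t, θ s, T) * (s / ρ s) + pd 1 G (ρ s - t, θ s, T) * (κ / ρ s ^ 2)) s := by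
    intro G hG s h1 h2 h3
    have := hG.chain (h2.sub_const t) h3 (hasDerivAt_const s T) hT
    simpa using this
  have e1 : (fun s => deriv (fun u => ε / √(ρ u) * F (ρ u - t, θ u, T)) s) =ᶠ[nhds s0]
      fun s => ε / √(ρ s) * (- s / (2 * ρ s ^ 2)) * F (ρ s - t, θ s, T)
        + ε / √(ρ s) * (pd 0 F (ρ s - t, θ s, T) * (s / ρ s)
          + pd 1 F (ρ s - t, θ s, T) * (κ / ρ s ^ 2)) := by
    filter_upwards [hev] with s ⟨h1, h2, h3⟩
    exact ((hk s h1 h2).mul (hG F h s h1 h2 h3)).deriv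
  rw [e1.deriv_eq]
  obtain ⟨h1, h2, h3⟩ := hev.self_of_nhds
  have K := hk s0 h1 h2
  have A := hG F h s0 h1 h2 h3
  have B := hG _ (h.pd 0) s0 h1 h2 h3
  have C := hG _ (h.pd 1) s0 h1 h2 h3
  have hr2 : (2 * ρ s0 ^ 2) ≠ 0 := by positivity
  have D1 := (hasDerivAt_id s0).neg.div ((h2.pow 2).const_mul 2) hr2
  have D2 := (hasDerivAt_id s0).div h2 h1.ne'
  have D3 := (hasDerivAt_const s0 κ).div (h2.pow 2) (pow_ne_zero 2 h1.ne')
  have tot := ((K.mul D1).mul A).add (K.mul ((B.mul D2).add (C.mul D3)))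
  refine (HasDerivAt.deriv (f' := _) tot).trans ?_
  have hc := h.pd_comm 1 0 (p := (ρ s0 - t, θ s0, T)) hT
  simp only [hc, Pi.mul_apply, Pi.div_apply, Pi.pow_apply, Pi.neg_apply, id, Pi.add_apply]
  have hm : 0 < √(ρ s0) := Real.sqrt_pos.2 h1
  field_simp
  ring

lemma slice_t {F : ℝ × ℝ × ℝ → ℝ} (h : Sm F) {c r a ε t0 : ℝ} (hε : 0 < ε) (ht : 0 < t0) :
    deriv (fun s => deriv (fun u => c * F (r - u, a, ε * √u)) s) t0 =
      c * (pd 0 (pd 0 F) (r - t0, a, ε * √t0)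
        - ε / √t0 * pd 2 (pd 0 F) (r - t0, a, ε * √t0)
        + ε ^ 2 / (4 * t0) * pd 2 (pd 2 F) (r - t0, a, ε * √t0)
        - ε / (4 * √t0 ^ 3) * pd 2 F (r - t0, a, ε * √t0)) ∧
    deriv (fun s => deriv (fun u => (c * F (r - u, a, ε * √u)) ^ 2) s) t0 =
      2 * c ^ 2 * ((pd 0 F (r - t0, a, ε * √t0)
          - ε / (2 * √t0) * pd 2 F (r - t0, a, ε * √t0)) ^ 2
        + F (r - t0, a, ε * √t0) * (pd 0 (pd 0 F) (r - t0, a, ε * √t0)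
        - ε / √t0 * pd 2 (pd 0 F) (r - t0, a, ε * √t0)
        + ε ^ 2 / (4 * t0) * pd 2 (pd 2 F) (r - t0, a, ε * √t0)
        - ε / (4 * √t0 ^ 3) * pd 2 F (r - t0, a, ε * √t0))) := by
  have hG : ∀ G, Sm G → ∀ s, 0 < s → HasDerivAt (fun u => G (r - u, a, ε * √u))
      (-pd 0 G (r - s, a, ε * √s) + pd 2 G (r - s, a, ε * √s) * (ε * (1 / (2 * √s)))) s := by
    intro G hG s hs
    have := hG.chain ((hasDerivAt_id s).const_sub r) (hasDerivAt_const s a)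
      ((Real.hasDerivAt_sqrt hs.ne').const_mul ε)
      (mul_pos hε (Real.sqrt_pos.2 hs))
    simpa using this
  have hpos : ∀ᶠ s in nhds t0, 0 < s := lt_mem_nhds ht
  have hn : 0 < √t0 := Real.sqrt_pos.2 ht
  have A := hG F h t0 ht
  have B := hG _ (h.pd 0) t0 ht
  have C := hG _ (h.pd 2) t0 ht
  have D := ((hasDerivAt_const t0 (1:ℝ)).div ((Real.hasDerivAt_sqrt ht.ne').const_mul 2)
    (by positivity)).const_mul ε
  have tot := (B.neg.add (C.mul D)).const_mul c
  have hc := h.pd_comm 0 2 (p := (r - t0, a, ε * √t0)) (mul_pos hε hn)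
  have hq : t0 = √t0 ^ 2 := (Real.sq_sqrt ht.le).symm
  constructor
  · have e1 : (fun s => deriv (fun u => c * F (r - u, a, ε * √u)) s) =ᶠ[nhds t0]
        fun s => c * (-pd 0 F (r - s, a, ε * √s)
          + pd 2 F (r - s, a, ε * √s) * (ε * (1 / (2 * √s)))) := by
      filter_upwards [hpos] with s hs
      exact ((hG F h s hs).const_mul c).deriv
    rw [e1.deriv_eq]
    refine (HasDerivAt.deriv (f' := _) tot).trans ?_
    simp only [hc, Pi.mul_apply, Pi.div_apply, Pi.pow_apply, Pi.neg_apply, id, Pi.add_apply]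
    rw [show ε ^ 2 / (4 * t0) = ε ^ 2 / (4 * √t0 ^ 2) by rw [← hq]]
    field_simp
    ring
  · have e1 : (fun s => deriv (fun u => (c * F (r - u, a, ε * √u)) ^ 2) s) =ᶠ[nhds t0]
        fun s => 2 * ((c * F (r - s, a, ε * √s)) * (c * (-pd 0 F (r - s, a, ε * √s)
          + pd 2 F (r - s, a, ε * √s) * (ε * (1 / (2 * √s)))))) := by
      filter_upwards [hpos] with s hs
      refine (((hG F h s hs).const_mul c).pow 2).deriv.trans ?_
      norm_num
      ring
    rw [e1.deriv_eq]
    refine (HasDerivAt.deriv (f' := _) (((A.const_mul c).mul tot).const_mul 2)).trans ?_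
    simp only [hc, Pi.mul_apply, Pi.div_apply, Pi.pow_apply, Pi.neg_apply, id, Pi.add_apply]
    rw [show ε ^ 2 / (4 * t0) = ε ^ 2 / (4 * √t0 ^ 2) by rw [← hq]]
    field_simp
    ring

lemma hasDerivAt_arg1 {s y : ℝ} (h : ((s : ℂ) + y * Complex.I) ∈ Complex.slitPlane) :
    HasDerivAt (fun u : ℝ => polarAngle (u, y)) (-y / √(s ^ 2 + y ^ 2) ^ 2) s := by
  have h1 : HasDerivAt (fun u : ℝ => (u : ℂ) + y * Complex.I) 1 s :=
    (Complex.ofRealCLM.hasDerivAt (x := s)).add_const _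
  have h2 := h1.clog_real h
  have h3 := Complex.imCLM.hasFDerivAt.comp_hasDerivAt s h2
  rw [Real.sq_sqrt (by positivity)]
  have he : ∀ u : ℝ, polarAngle (u, y) = (Complex.imCLM ∘ fun t : ℝ => Complex.log ((t : ℂ) + y * Complex.I)) u := fun u => by
    simp [polarAngle, Complex.log_im]
  refine HasDerivAt.congr_deriv (f := fun u : ℝ => polarAngle (u, y)) (h3.congr_of_eventuallyEq
    (Filter.Eventually.of_forall he)) ?_
  simp [Complex.div_im, Complex.normSq_apply, sq, neg_div]

lemma hasDerivAt_arg2 {s y : ℝ} (h : ((y : ℂ) + s * Complex.I) ∈ Complex.slitPlane) :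
    HasDerivAt (fun u : ℝ => polarAngle (y, u)) (y / √(y ^ 2 + s ^ 2) ^ 2) s := by
  have h1 : HasDerivAt (fun u : ℝ => (y : ℂ) + u * Complex.I) (1 * Complex.I) s :=
    ((Complex.ofRealCLM.hasDerivAt (x := s)).mul_const _).const_add _
  have h2 := h1.clog_real h
  have h3 := Complex.imCLM.hasFDerivAt.comp_hasDerivAt s h2
  rw [Real.sq_sqrt (by positivity)]
  have he : ∀ u : ℝ, polarAngle (y, u) = (Complex.imCLM ∘ fun t : ℝ => Complex.log ((y : ℂ) + t * Complex.I)) u := fun u => by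
    simp [polarAngle, Complex.log_im]
  refine HasDerivAt.congr_deriv (f := fun u : ℝ => polarAngle (y, u)) (h3.congr_of_eventuallyEq
    (Filter.Eventually.of_forall he)) ?_
  simp [Complex.div_im, Complex.normSq_apply, sq]

lemma sqrt_deriv {s y : ℝ} (h : 0 < s ^ 2 + y ^ 2) :
    HasDerivAt (fun u : ℝ => √(u ^ 2 + y ^ 2)) (s / √(s ^ 2 + y ^ 2)) s := by
  have := (((hasDerivAt_id s).pow 2).add_const (y ^ 2)).sqrt (by simpa using h.ne')
  refine this.congr_deriv ?_
  have hh := Real.sqrt_pos.2 h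
  simp
  field_simp

/-- local smooth branch of the angle -/
lemma branch {x₁ x₂ : ℝ} (hx : (x₁, x₂) ≠ (0, 0)) : ∃ (θ : ℝ × ℝ → ℝ) (U : Set (ℝ × ℝ)),
    IsOpen U ∧ (x₁, x₂) ∈ U ∧ θ (x₁, x₂) = polarAngle (x₁, x₂) ∧
    ∀ q ∈ U, 0 < q.1 ^ 2 + q.2 ^ 2 ∧ (θ q = polarAngle q ∨ θ q = polarAngle q + 2 * Real.pi) ∧
      HasDerivAt (fun u => θ (u, q.2)) (-q.2 / √(q.1 ^ 2 + q.2 ^ 2) ^ 2) q.1 ∧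
      HasDerivAt (fun u => θ (q.1, u)) (q.1 / √(q.1 ^ 2 + q.2 ^ 2) ^ 2) q.2 := by
  by_cases hs : ((x₁ : ℂ) + x₂ * Complex.I) ∈ Complex.slitPlane
  · refine ⟨polarAngle, {q | ((q.1 : ℂ) + q.2 * Complex.I) ∈ Complex.slitPlane}, ?_, hs, rfl, ?_⟩
    · exact Complex.isOpen_slitPlane.preimage (by fun_prop)
    · intro q hq
      refine ⟨?_, Or.inl rfl, hasDerivAt_arg1 hq, hasDerivAt_arg2 hq⟩
      have h := Set.mem_ofPred_eq ▸ hq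
      rw [Complex.mem_slitPlane_iff] at h
      simp at h
      rcases h with h | h <;> positivity
  · rw [Complex.mem_slitPlane_iff] at hs
    simp at hs
    obtain ⟨h1, rfl⟩ := hs
    have h1' : x₁ < 0 := lt_of_le_of_ne h1 (fun h => hx (by simp [h]))
    have hslit : ∀ q : ℝ × ℝ, q.1 < 0 → (((-q.1 : ℝ) : ℂ) + ((-q.2 : ℝ) : ℂ) * Complex.I)
        ∈ Complex.slitPlane := by
      intro q hq
      rw [Complex.mem_slitPlane_iff]; left; simpa using hq
    have heq : ∀ q : ℝ × ℝ, ((-q.1 : ℝ) : ℂ) + ((-q.2 : ℝ) : ℂ) * Complex.I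
        = -((q.1 : ℂ) + q.2 * Complex.I) := by
      intro q; push_cast; ring
    refine ⟨fun q => polarAngle (-q.1, -q.2) + Real.pi, {q | q.1 < 0},
      isOpen_lt (by fun_prop) continuous_const, h1', ?_, ?_⟩
    · have a1 : polarAngle (x₁, 0) = Real.pi := by
        simp [polarAngle, Complex.arg_ofReal_of_neg h1']
      have a2 : polarAngle (-x₁, -0) = 0 := by
        have := Complex.arg_ofReal_of_nonneg (x := -x₁) (by linarith)
        simpa [polarAngle] using this
      simp only [a1, a2]; ring
    · intro q hq
      have hq' : q.1 < 0 := hq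
      refine ⟨?_, ?_, ?_, ?_⟩
      · have := hq'.ne; positivity
      · simp only [polarAngle, heq]
        by_cases h2 : 0 ≤ q.2
        · left
          have : ((q.1 : ℂ) + q.2 * Complex.I).arg
            = (-((q.1 : ℂ) + q.2 * Complex.I)).arg + Real.pi := by
            rcases h2.lt_or_eq with h2 | h2
            · rw [Complex.arg_neg_eq_arg_sub_pi_of_im_pos (by simpa using h2)]; ring
            · rw [← h2]
              have e1 := Complex.arg_ofReal_of_nonneg (x := -q.1) (by linarith)
              have e2 := Complex.arg_ofReal_of_neg hq'
              rw [Complex.ofReal_neg] at e1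
              simp [e1, e2]
          exact this.symm
        · right
          rw [Complex.arg_neg_eq_arg_add_pi_of_im_neg (by simpa using h2)]; ring
      · have h := (hasDerivAt_arg1 (hslit q hq')).comp q.1 (hasDerivAt_neg q.1)
        refine (h.add_const Real.pi).congr_deriv ?_
        simp [neg_div]
      · have h := (hasDerivAt_arg2 (hslit q hq')).comp q.2 (hasDerivAt_neg q.2)
        refine (h.add_const Real.pi).congr_deriv ?_
        simp [neg_div]

lemma pd_congr {w v : ℝ × ℝ × ℝ → ℝ} {p : ℝ × ℝ × ℝ} (h : w =ᶠ[nhds p] v) (i : Fin 3) :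
    pd i w =ᶠ[nhds p] pd i v := by
  filter_upwards [eventually_eventually_nhds.2 h] with q hq
  obtain ⟨a, b, c⟩ := q
  have h0 : Filter.Tendsto (fun s : ℝ => ((s, b, c) : ℝ × ℝ × ℝ)) (nhds a) (nhds (a, b, c)) :=
    Continuous.tendsto' (by fun_prop) _ _ rfl
  have h1 : Filter.Tendsto (fun s : ℝ => ((a, s, c) : ℝ × ℝ × ℝ)) (nhds b) (nhds (a, b, c)) :=
    Continuous.tendsto' (by fun_prop) _ _ rfl
  have h2 : Filter.Tendsto (fun s : ℝ => ((a, b, s) : ℝ × ℝ × ℝ)) (nhds c) (nhds (a, b, c)) :=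
    Continuous.tendsto' (by fun_prop) _ _ rfl
  fin_cases i
  · exact Filter.EventuallyEq.deriv_eq (h0.eventually hq)
  · exact Filter.EventuallyEq.deriv_eq (h1.eventually hq)
  · exact Filter.EventuallyEq.deriv_eq (h2.eventually hq)

lemma Pop_congr {w v : ℝ × ℝ × ℝ → ℝ} {p : ℝ × ℝ × ℝ} (h : w =ᶠ[nhds p] v) :
    Pop w p = Pop v p := by
  have h2 : (fun q => w q ^ 2) =ᶠ[nhds p] fun q => v q ^ 2 := by
    filter_upwards [h] with q hq
    rw [hq]
  unfold Pop
  rw [(pd_congr (pd_congr h 2) 2).eq_of_nhds, (pd_congr (pd_congr h 0) 0).eq_of_nhds,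
    (pd_congr (pd_congr h 1) 1).eq_of_nhds, (pd_congr (pd_congr h2 2) 2).eq_of_nhds]

/-- **Lemma II.2**: there exist smooth functions `h₁, h₂, h₃, h₀` of `(ε, α, R, τ, F)`,
`2π`-periodic in `α`, such that for `w = (ε/r^{1/2}) F(r − t, α, ε t^{1/2})` one has the
identity `(r/ε²) P(w) = P̃(F)` at every point with `r > 0`, `t > 0`. -/
theorem normalized_equation :
    ∃ h1 h2 h3 h0 : ℝ × ℝ × ℝ × ℝ × ℝ → ℝ,
      SmoothCoeff h1 ∧ SmoothCoeff h2 ∧ SmoothCoeff h3 ∧ SmoothCoeff h0 ∧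
      ∀ ε : ℝ, 0 < ε → ε ≤ 1 →
        ∀ F : ℝ × ℝ × ℝ → ℝ,
          ContDiffOn ℝ (⊤ : ℕ∞) F {q : ℝ × ℝ × ℝ | 0 < q.2.2} →
          (∀ σ α τ : ℝ, F (σ, α + 2 * Real.pi, τ) = F (σ, α, τ)) →
          ∀ x₁ x₂ t : ℝ, (x₁, x₂) ≠ (0, 0) → 0 < t →
            (Real.sqrt (x₁ ^ 2 + x₂ ^ 2) / ε ^ 2) *
              Pop (fun q : ℝ × ℝ × ℝ =>
                  ε / Real.sqrt (Real.sqrt (q.1 ^ 2 + q.2.1 ^ 2)) *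
                    F (Real.sqrt (q.1 ^ 2 + q.2.1 ^ 2) - q.2.2,
                      polarAngle (q.1, q.2.1), ε * Real.sqrt q.2.2))
                (x₁, x₂, t) =
            Ptilde h1 h2 h3 h0 ε F
              (Real.sqrt (x₁ ^ 2 + x₂ ^ 2) - t, polarAngle (x₁, x₂),
                ε * Real.sqrt t) := by
  refine ⟨fun _ => 0, fun _ => 0,
    fun q => (-√q.2.2.1 + q.1 ^ 2 * q.2.2.2.2) / (4 * q.2.2.2.1 ^ 3),
    fun q => -(q.2.2.1 ^ (-(3 : ℝ) / 2) * q.2.2.2.2 / 4),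
    ⟨contDiffOn_const, fun _ _ _ _ _ => rfl⟩, ⟨contDiffOn_const, fun _ _ _ _ _ => rfl⟩,
    ⟨?_, fun _ _ _ _ _ => rfl⟩, ⟨?_, fun _ _ _ _ _ => rfl⟩, ?_⟩
  · intro q hq
    obtain ⟨_, h1, h2⟩ := hq
    have h3 : 4 * q.2.2.2.1 ^ 3 ≠ 0 := by positivity
    refine ContDiffAt.contDiffWithinAt ?_
    have hR : ContDiffAt ℝ (⊤ : ℕ∞) (fun q : ℝ × ℝ × ℝ × ℝ × ℝ => q.2.2.1) q := by fun_prop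
    exact (((hR.sqrt h1.ne').neg).add (by fun_prop)).div (by fun_prop) h3
  · intro q hq
    obtain ⟨_, h1, h2⟩ := hq
    refine ContDiffAt.contDiffWithinAt ?_
    have hR : ContDiffAt ℝ (⊤ : ℕ∞) (fun q : ℝ × ℝ × ℝ × ℝ × ℝ => q.2.2.1) q := by fun_prop
    exact (((hR.rpow_const_of_ne h1.ne').mul (by fun_prop)).div_const 4).neg
  intro ε hε _ F hF hper x₁ x₂ t hx ht
  obtain ⟨θ, U, hU, hxU, hθ0, hθ⟩ := branch hx
  have hcong : (fun q : ℝ × ℝ × ℝ =>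
                  ε / Real.sqrt (Real.sqrt (q.1 ^ 2 + q.2.1 ^ 2)) *
                    F (Real.sqrt (q.1 ^ 2 + q.2.1 ^ 2) - q.2.2,
                      polarAngle (q.1, q.2.1), ε * Real.sqrt q.2.2)) =ᶠ[nhds (x₁, x₂, t)]
      (fun q : ℝ × ℝ × ℝ =>
                  ε / Real.sqrt (Real.sqrt (q.1 ^ 2 + q.2.1 ^ 2)) *
                    F (Real.sqrt (q.1 ^ 2 + q.2.1 ^ 2) - q.2.2,
                      θ (q.1, q.2.1), ε * Real.sqrt q.2.2)) := by
    have hV : IsOpen {q : ℝ × ℝ × ℝ | (q.1, q.2.1) ∈ U} :=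
      hU.preimage (f := fun q : ℝ × ℝ × ℝ => (q.1, q.2.1)) (by fun_prop)
    filter_upwards [hV.mem_nhds hxU] with q hq
    rcases (hθ _ hq).2.1 with h | h
    · rw [h]
    · rw [h, hper]
  rw [Pop_congr hcong, ← hθ0]
  have hSm : Sm F := hF
  have hT : 0 < ε * √t := mul_pos hε (Real.sqrt_pos.2 ht)
  have E1 : ∀ᶠ s in nhds x₁, (s, x₂) ∈ U :=
    (Continuous.tendsto' (f := fun s : ℝ => (s, x₂)) (by fun_prop) x₁ _ rfl).eventually
      (hU.mem_nhds hxU)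
  have E2 : ∀ᶠ s in nhds x₂, (x₁, s) ∈ U :=
    (Continuous.tendsto' (f := fun s : ℝ => (x₁, s)) (by fun_prop) x₂ _ rfl).eventually
      (hU.mem_nhds hxU)
  have S1 := slice_x hSm (ρ := fun s => √(s ^ 2 + x₂ ^ 2)) (θ := fun s => θ (s, x₂)) (κ := -x₂)
    (ε := ε) (t := t) (T := ε * √t) (s0 := x₁) hT (by
      filter_upwards [E1] with s hs
      obtain ⟨a, -, b, -⟩ := hθ _ hs
      exact ⟨Real.sqrt_pos.2 a, sqrt_deriv a, b⟩)
  have S2 := slice_x hSm (ρ := fun s => √(x₁ ^ 2 + s ^ 2)) (θ := fun s => θ (x₁, s)) (κ := x₁)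
    (ε := ε) (t := t) (T := ε * √t) (s0 := x₂) hT (by
      filter_upwards [E2] with s hs
      obtain ⟨a, -, -, b⟩ := hθ _ hs
      refine ⟨Real.sqrt_pos.2 a, ?_, b⟩
      have := sqrt_deriv (s := s) (y := x₁) (by rw [add_comm]; exact a)
      simpa only [add_comm] using this)
  obtain ⟨S3, S4⟩ := slice_t hSm (c := ε / √√(x₁ ^ 2 + x₂ ^ 2)) (r := √(x₁ ^ 2 + x₂ ^ 2))
    (a := θ (x₁, x₂)) hε ht
  have hP : ∀ w : ℝ × ℝ × ℝ → ℝ, Pop w (x₁, x₂, t) =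
      deriv (fun s => deriv (fun u => w (x₁, x₂, u)) s) t
      - (deriv (fun s => deriv (fun u => w (u, x₂, t)) s) x₁
        + deriv (fun s => deriv (fun u => w (x₁, u, t)) s) x₂)
      - (1 / 2) * deriv (fun s => deriv (fun u => w (x₁, x₂, u) ^ 2) s) t := fun w => rfl
  rw [hP]
  simp only at S1 S2 S3 S4 ⊢
  rw [S1, S2, S3, S4]
  have hpos : 0 < x₁ ^ 2 + x₂ ^ 2 := (hθ _ hxU).1
  have hr := Real.sqrt_pos.2 hpos
  have hr2 : √(x₁ ^ 2 + x₂ ^ 2) ^ 2 = x₁ ^ 2 + x₂ ^ 2 := Real.sq_sqrt hpos.le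
  unfold Ptilde
  simp only
  generalize √(x₁ ^ 2 + x₂ ^ 2) = r at *
  have hm := Real.sqrt_pos.2 hr
  have hm2 : √r ^ 2 = r := Real.sq_sqrt hr.le
  have hn := Real.sqrt_pos.2 ht
  have hn2 : √t ^ 2 = t := Real.sq_sqrt ht.le
  have hR : (ε * √t) ^ 2 + ε ^ 2 * (r - t) = (ε * √r) ^ 2 := by
    rw [mul_pow, mul_pow, hn2, hm2]; ring
  have hRs : √((ε * √r) ^ 2) = ε * √r := Real.sqrt_sq (by positivity)
  have hRp : ((ε * √r) ^ 2) ^ (-(3 : ℝ) / 2) = 1 / (ε * √r) ^ 3 := by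
    rw [← Real.rpow_natCast (ε * √r) 2, ← Real.rpow_mul (by positivity),
      show ((2 : ℕ) : ℝ) * (-(3 : ℝ) / 2) = -((3 : ℕ) : ℝ) by norm_num,
      Real.rpow_neg (by positivity), Real.rpow_natCast, one_div]
  rw [hR, hRs, hRp]
  generalize F (r - t, θ (x₁, x₂), ε * √t) = f at *
  generalize pd 0 F (r - t, θ (x₁, x₂), ε * √t) = f0 at *
  generalize pd 1 F (r - t, θ (x₁, x₂), ε * √t) = f1 at *
  generalize pd 2 F (r - t, θ (x₁, x₂), ε * √t) = f2 at *
  generalize pd 0 (pd 0 F) (r - t, θ (x₁, x₂), ε * √t) = f00 at *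
  generalize pd 0 (pd 1 F) (r - t, θ (x₁, x₂), ε * √t) = f01 at *
  generalize pd 1 (pd 1 F) (r - t, θ (x₁, x₂), ε * √t) = f11 at *
  generalize pd 2 (pd 0 F) (r - t, θ (x₁, x₂), ε * √t) = f20 at *
  generalize pd 2 (pd 2 F) (r - t, θ (x₁, x₂), ε * √t) = f22 at *
  clear S1 S2 S3 S4 hR hRs hRp hcong
  have hx2 : x₂ ^ 2 = r ^ 2 - x₁ ^ 2 := by linarith
  generalize √r = m at *
  generalize √t = n at *
  subst hm2 hn2
  have L : (x₁ ^ 2 / (m ^ 2) ^ 2 * f00 + 2 * x₁ * -x₂ / (m ^ 2) ^ 3 * f01 + (-x₂) ^ 2 / (m ^ 2) ^ 4 * f11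
        + (1 / m ^ 2 - 2 * x₁ ^ 2 / (m ^ 2) ^ 3) * f0 + -3 * x₁ * -x₂ / (m ^ 2) ^ 4 * f1
        + (5 * x₁ ^ 2 / (4 * (m ^ 2) ^ 4) - 1 / (2 * (m ^ 2) ^ 2)) * f)
      + (x₂ ^ 2 / (m ^ 2) ^ 2 * f00 + 2 * x₂ * x₁ / (m ^ 2) ^ 3 * f01 + x₁ ^ 2 / (m ^ 2) ^ 4 * f11
        + (1 / m ^ 2 - 2 * x₂ ^ 2 / (m ^ 2) ^ 3) * f0 + -3 * x₂ * x₁ / (m ^ 2) ^ 4 * f1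
        + (5 * x₂ ^ 2 / (4 * (m ^ 2) ^ 4) - 1 / (2 * (m ^ 2) ^ 2)) * f)
      = f00 + f11 / m ^ 4 + f / (4 * m ^ 4) := by
    rw [neg_sq, hx2]
    field_simp
    ring
  rw [← mul_add, L]
  field_simp
  ring

end
end
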